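/- Let n ≥ 3, μ, ν ∈ ℝ, 1 ≤ p, q ≤ ∞ and 0 < r ≤ ∞. Assume μ > ν, 0 < ν/n + 1/q < μ/n + 1/p ≤ 1 and ν/n + 1/q = (μ/n + 1/p) − 2/n. Assume in addition that either (1) p, q < ∞ and μ/n + 1/p < 1, or (2) r ≤ 1. Then there exists a constant C, independent of t and f, such that for every T > 0, every t ∈ (0,T] and every measurable function f on (0,T)×ℝⁿ for which the Duhamel integral converges absolutely a.e., ‖∫₀ᵗ e^{(t−τ)Δ}f(τ)·dτ‖_{K̇^ν_{q,∞}} ≤ C·sup_{0<τ<t} ‖f(τ)‖_{K̇^μ_{p,r}} (Meyer's inequality on Herz spaces). -/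

import Mathlib

open MeasureTheory Set ENNReal Filter

noncomputable section

abbrev Euc (n : ℕ) : Type := EuclideanSpace ℝ (Fin n)

def annulus (n : ℕ) (j : ℤ) : Set (Euc n) :=
  {x : Euc n | (2 : ℝ) ^ (j - 1) ≤ ‖x‖ ∧ ‖x‖ < (2 : ℝ) ^ j}

def herzNorm (n : ℕ) (s : ℝ) (q r : ℝ≥0∞) (f : Euc n → ℝ) : ℝ≥0∞ :=
  if r = ⊤ then
    ⨆ j : ℤ, ENNReal.ofReal ((2 : ℝ) ^ ((j : ℝ) * s)) *
      eLpNorm ((annulus n j).indicator f) q volume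
  else
    (∑' j : ℤ, (ENNReal.ofReal ((2 : ℝ) ^ ((j : ℝ) * s)) *
      eLpNorm ((annulus n j).indicator f) q volume) ^ r.toReal) ^ (1 / r.toReal)

def heatKernel (n : ℕ) (t : ℝ) (x y : Euc n) : ℝ :=
  (4 * Real.pi * t) ^ (-(n : ℝ) / 2) * Real.exp (-‖x - y‖ ^ 2 / (4 * t))

def heatSemigroup (n : ℕ) (t : ℝ) (f : Euc n → ℝ) (x : Euc n) : ℝ :=
  ∫ y, heatKernel n t x y * f y

open scoped NNReal

/-! To bound the Duhamel integral on the annulus `A_k`, split the source into the part in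
`A_{k-1} ∪ A_k ∪ A_{k+1}` and the rest.

Far sources `y` are at distance about `max (2 ^ k) ‖y‖` from `A_k`. The heat kernel integrated over
all times is at most `c ‖x - y‖ ^ (2 - n)`, so by Hölder on annuli the source in `A_j` contributes
`2 ^ (-k (n - 2)) 2 ^ (j (n - μ - n / p))` times its Herz block if `j < k`, and
`2 ^ (-j (μ + n / p - 2))` times it if `j > k`. The second sum is geometric as `ν + n / q > 0`. The
first one is geometric if `μ + n / p < n`, and in the borderline case an `ℓ¹` sum of Herz blocks,
which `r ≤ 1` controls.

For near sources, Hölder on `A_k` reduces to `q ≥ p`. Young's inequality at each time, followed by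
Minkowski's inequality in `τ`, then leaves the time integral of a norm of the kernel restricted to a
ball of radius about `2 ^ k`. Near `s = 0` that norm is `s ^ (-(n / 2) (1 / p - 1 / q))`,
integrable because `n / p - n / q = 2 - (μ - ν) < 2`; for `s` beyond `4 ^ k` it decays like
`s ^ (-n / 2)`, integrable because `n > 2`. -/

section IntegralInequalities

open scoped MeasureTheory

variable {α β G : Type*} [MeasurableSpace α] [MeasurableSpace β] [MeasurableSpace G]

theorem lintegral_mul_le_eLpNorm_mul_eLpNorm {κ : Measure α} {p q : ℝ≥0∞} [p.HolderConjugate q]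
    {f g : α → ℝ≥0∞} (hf : AEMeasurable f κ) (hg : AEMeasurable g κ) :
    ∫⁻ x, f x * g x ∂κ ≤ eLpNorm f p κ * eLpNorm g q κ := by
  have hpq : p⁻¹ + q⁻¹ = 1 := HolderConjugate.inv_add_inv_eq_one p q
  rcases eq_or_ne p ⊤ with rfl | hp
  · obtain rfl : q = 1 := by simpa using hpq
    rw [eLpNorm_exponent_top, eLpNorm_one_eq_lintegral_enorm,
      ← lintegral_const_mul'' _ hg.enorm]
    refine lintegral_mono_ae ?_
    filter_upwards [enorm_ae_le_eLpNormEssSup f κ] with x hx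
    exact mul_le_mul_left hx _
  rcases eq_or_ne q ⊤ with rfl | hq
  · obtain rfl : p = 1 := by simpa using hpq
    rw [eLpNorm_exponent_top, eLpNorm_one_eq_lintegral_enorm,
      ← lintegral_mul_const'' _ hf.enorm]
    refine lintegral_mono_ae ?_
    filter_upwards [enorm_ae_le_eLpNormEssSup g κ] with x hx
    exact mul_le_mul_right hx _
  have hp0 : p ≠ 0 := (HolderConjugate.pos p q).ne'
  have hq0 : q ≠ 0 := (HolderConjugate.pos q p).ne'
  rw [eLpNorm_eq_lintegral_rpow_enorm_toReal hp0 hp,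
    eLpNorm_eq_lintegral_rpow_enorm_toReal hq0 hq]
  exact ENNReal.lintegral_mul_le_Lp_mul_Lq κ
    (HolderConjugate.toReal_of_ne_top hp hq) hf hg

theorem lintegral_mul_le_mul_rpow {κ : Measure α} {f g : α → ℝ≥0∞} (hf : AEMeasurable f κ)
    (hg : AEMeasurable g κ) {p m c : ℝ} (hp : 1 ≤ p) (hm : 1 ≤ m) (hc : 0 ≤ c)
    (hpm : p⁻¹ + m⁻¹ = 1 + c) :
    ∫⁻ y, f y * g y ∂κ ≤ (∫⁻ y, f y ^ p * g y ^ m ∂κ) ^ c * (∫⁻ y, f y ^ p ∂κ) ^ (p⁻¹ - c) *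
      (∫⁻ y, g y ^ m ∂κ) ^ (m⁻¹ - c) := by
  have hp0 : 0 < p := by linarith
  have hm0 : 0 < m := by linarith
  have hcp : 0 ≤ p⁻¹ - c := by linarith [inv_le_one_of_one_le₀ hm]
  have hcm : 0 ≤ m⁻¹ - c := by linarith [inv_le_one_of_one_le₀ hp]
  have split_rpow (a : ℝ≥0∞) {s : ℝ} (hs : 0 < s) (hcs : 0 ≤ s⁻¹ - c) :
      (a ^ s) ^ c * (a ^ s) ^ (s⁻¹ - c) = a := by
    rw [← ENNReal.rpow_add_of_nonneg _ _ hc hcs, add_sub_cancel, ENNReal.rpow_rpow_inv hs.ne']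
  have holder := ENNReal.lintegral_prod_norm_pow_le (μ := κ) Finset.univ
    (f := ![fun y => f y ^ p * g y ^ m, fun y => f y ^ p, fun y => g y ^ m])
    (p := ![c, p⁻¹ - c, m⁻¹ - c])
    (by
      simpa [Fin.forall_fin_succ] using
        ⟨(hf.pow_const p).mul (hg.pow_const m), hf.pow_const p, hg.pow_const m⟩)
    (by simp [Fin.sum_univ_three]; linarith)
    (by simp [Fin.forall_fin_succ, hc, sub_nonneg.1 hcp, sub_nonneg.1 hcm])
  simp only [Fin.prod_univ_three, Matrix.cons_val_zero, Matrix.cons_val_one,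
    Matrix.cons_val] at holder
  refine le_trans (lintegral_mono fun y => le_of_eq ?_) holder
  calc f y * g y
      = ((f y ^ p) ^ c * (f y ^ p) ^ (p⁻¹ - c)) * ((g y ^ m) ^ c * (g y ^ m) ^ (m⁻¹ - c)) := by
        rw [split_rpow _ hp0 hcp, split_rpow _ hm0 hcm]
    _ = (f y ^ p * g y ^ m) ^ c * (f y ^ p) ^ (p⁻¹ - c) * (g y ^ m) ^ (m⁻¹ - c) := by
        rw [ENNReal.mul_rpow_of_nonneg _ _ hc]; ring

section Young

variable [AddGroup G] [MeasurableAdd₂ G] [MeasurableNeg G] {κ : Measure G}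

theorem measurable_uncurry_lconvolution [SFinite κ] {f g : β → G → ℝ≥0∞}
    (hf : Measurable (Function.uncurry f)) (hg : Measurable (Function.uncurry g)) :
    Measurable (Function.uncurry fun τ => f τ ⋆ₗ[κ] g τ) :=
  ((hf.comp (by fun_prop : Measurable fun z : (β × G) × G => (z.1.1, z.2))).mul
    (hg.comp (by fun_prop : Measurable fun z : (β × G) × G =>
      (z.1.1, -z.2 + z.1.2)))).lintegral_prod_right'

variable [κ.IsAddLeftInvariant]

theorem lintegral_lconvolution [SFinite κ] {f g : G → ℝ≥0∞} (hf : Measurable f)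
    (hg : Measurable g) :
    ∫⁻ x, (f ⋆ₗ[κ] g) x ∂κ = (∫⁻ y, f y ∂κ) * ∫⁻ y, g y ∂κ := by
  simp only [lconvolution_def]
  rw [lintegral_lintegral_swap (by fun_prop), ← lintegral_mul_const _ hf]
  refine lintegral_congr fun y => ?_
  rw [lintegral_const_mul _ (by fun_prop), lintegral_add_left_eq_self g (-y)]

variable [κ.IsNegInvariant]

theorem lintegral_neg_add_eq_self (g : G → ℝ≥0∞) (x : G) :
    ∫⁻ y, g (-y + x) ∂κ = ∫⁻ y, g y ∂κ := by
  rw [← lintegral_neg_eq_self g, ← lintegral_add_left_eq_self (fun y => g (-y)) (-x)]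
  simp only [neg_add_rev, neg_neg]

theorem lconvolution_le_mul_rpow {f g : G → ℝ≥0∞} (hf : Measurable f) (hg : Measurable g)
    {p m c : ℝ} (hp : 1 ≤ p) (hm : 1 ≤ m) (hc : 0 ≤ c) (hpm : p⁻¹ + m⁻¹ = 1 + c) (x : G) :
    (f ⋆ₗ[κ] g) x ≤ ((fun y => f y ^ p) ⋆ₗ[κ] fun y => g y ^ m) x ^ c *
      ((∫⁻ y, f y ^ p ∂κ) ^ (p⁻¹ - c) * (∫⁻ y, g y ^ m ∂κ) ^ (m⁻¹ - c)) := by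
  rw [← lintegral_neg_add_eq_self (fun y => g y ^ m) x, ← mul_assoc]
  exact lintegral_mul_le_mul_rpow hf.aemeasurable (hg.comp (by fun_prop)).aemeasurable
    hp hm hc hpm

theorem lintegral_lconvolution_rpow_le [SFinite κ] {f g : G → ℝ≥0∞} (hf : Measurable f)
    (hg : Measurable g) {p m c : ℝ} (hp : 1 ≤ p) (hm : 1 ≤ m) (hc : 0 < c)
    (hpm : p⁻¹ + m⁻¹ = 1 + c) :
    (∫⁻ x, (f ⋆ₗ[κ] g) x ^ c⁻¹ ∂κ) ^ c ≤
      (∫⁻ y, f y ^ p ∂κ) ^ p⁻¹ * (∫⁻ y, g y ^ m ∂κ) ^ m⁻¹ := by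
  have hcp : 0 ≤ p⁻¹ - c := by linarith [inv_le_one_of_one_le₀ hm]
  have hcm : 0 ≤ m⁻¹ - c := by linarith [inv_le_one_of_one_le₀ hp]
  set F := ∫⁻ y, f y ^ p ∂κ
  set H := ∫⁻ y, g y ^ m ∂κ
  have pointwise (x : G) : (f ⋆ₗ[κ] g) x ^ c⁻¹ ≤
      ((fun y => f y ^ p) ⋆ₗ[κ] fun y => g y ^ m) x * (F ^ (p⁻¹ - c) * H ^ (m⁻¹ - c)) ^ c⁻¹ := by
    have := ENNReal.rpow_le_rpow (lconvolution_le_mul_rpow (κ := κ) hf hg hp hm hc.le hpm x)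
      (inv_nonneg.2 hc.le)
    rwa [ENNReal.mul_rpow_of_nonneg _ _ (inv_nonneg.2 hc.le), ENNReal.rpow_rpow_inv hc.ne'] at this
  calc (∫⁻ x, (f ⋆ₗ[κ] g) x ^ c⁻¹ ∂κ) ^ c
      ≤ (∫⁻ x, ((fun y => f y ^ p) ⋆ₗ[κ] fun y => g y ^ m) x *
          (F ^ (p⁻¹ - c) * H ^ (m⁻¹ - c)) ^ c⁻¹ ∂κ) ^ c := by
        gcongr with x; exact pointwise x
    _ = (F * H) ^ c * (F ^ (p⁻¹ - c) * H ^ (m⁻¹ - c)) := by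
        rw [lintegral_mul_const _ (by fun_prop),
          lintegral_lconvolution (hf.pow_const p) (hg.pow_const m),
          ENNReal.mul_rpow_of_nonneg _ _ hc.le, ENNReal.rpow_inv_rpow hc.ne']
    _ = (F ^ c * F ^ (p⁻¹ - c)) * (H ^ c * H ^ (m⁻¹ - c)) := by
        rw [ENNReal.mul_rpow_of_nonneg _ _ hc.le]; ring
    _ = F ^ p⁻¹ * H ^ m⁻¹ := by
        rw [← ENNReal.rpow_add_of_nonneg _ _ hc.le hcp, ← ENNReal.rpow_add_of_nonneg _ _ hc.le hcm,
          add_sub_cancel, add_sub_cancel]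

theorem eLpNorm_lconvolution_top_le {f g : G → ℝ≥0∞} (hf : Measurable f)
    (hg : Measurable g) {p m : ℝ≥0∞} [p.HolderConjugate m] :
    eLpNorm (f ⋆ₗ[κ] g) ⊤ κ ≤ eLpNorm f p κ * eLpNorm g m κ := by
  refine eLpNormEssSup_le_of_ae_enorm_bound (ae_of_all _ fun x => ?_)
  have reflect : MeasurePreserving (fun y => -y + x) κ κ := by
    simpa [Function.comp_def] using
      (Measure.measurePreserving_neg κ).comp (measurePreserving_add_left κ (-x))
  calc ∫⁻ y, f y * g (-y + x) ∂κ
      ≤ eLpNorm f p κ * eLpNorm (g ∘ fun y => -y + x) m κ :=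
        lintegral_mul_le_eLpNorm_mul_eLpNorm hf.aemeasurable
          (hg.comp reflect.measurable).aemeasurable
    _ = eLpNorm f p κ * eLpNorm g m κ := by
        rw [eLpNorm_comp_measurePreserving hg.aestronglyMeasurable reflect]

theorem eLpNorm_lconvolution_le [SFinite κ] {f g : G → ℝ≥0∞} (hf : Measurable f)
    (hg : Measurable g) {p m q : ℝ≥0∞} (hp : 1 ≤ p) (hm : 1 ≤ m) (hpm : p⁻¹ + m⁻¹ = 1 + q⁻¹) :
    eLpNorm (f ⋆ₗ[κ] g) q κ ≤ eLpNorm f p κ * eLpNorm g m κ := by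
  have hp' : p⁻¹ ≤ 1 := ENNReal.inv_le_one.2 hp
  have hm' : m⁻¹ ≤ 1 := ENNReal.inv_le_one.2 hm
  rcases eq_or_ne q ⊤ with rfl | hq
  · have : p.HolderConjugate m := holderConjugate_iff.2 (by simpa using hpm)
    exact eLpNorm_lconvolution_top_le hf hg
  have hqp : q⁻¹ ≤ p⁻¹ :=
    (ENNReal.add_le_add_iff_left one_ne_top).1 (hpm ▸ add_comm p⁻¹ 1 ▸ add_le_add_right hm' _)
  have hqm : q⁻¹ ≤ m⁻¹ := (ENNReal.add_le_add_iff_left one_ne_top).1 (hpm ▸ add_le_add_left hp' _)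
  have hpt : p ≠ ⊤ := by rintro rfl; simp_all
  have hmt : m ≠ ⊤ := by rintro rfl; simp_all
  have hq0 : q ≠ 0 := by rintro rfl; simp_all
  have hreal : p.toReal⁻¹ + m.toReal⁻¹ = 1 + q.toReal⁻¹ := by
    have := congrArg ENNReal.toReal hpm
    rwa [toReal_add (hp'.trans_lt one_lt_top).ne (hm'.trans_lt one_lt_top).ne,
      toReal_add one_ne_top (inv_ne_top.2 hq0), toReal_inv, toReal_inv, toReal_inv,
      toReal_one] at this
  rw [eLpNorm_eq_lintegral_rpow_enorm_toReal hq0 hq,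
    eLpNorm_eq_lintegral_rpow_enorm_toReal (zero_lt_one.trans_le hp).ne' hpt,
    eLpNorm_eq_lintegral_rpow_enorm_toReal (zero_lt_one.trans_le hm).ne' hmt]
  simpa using lintegral_lconvolution_rpow_le hf hg (toReal_mono hpt hp) (toReal_mono hmt hm)
    (inv_pos.2 (toReal_pos hq0 hq)) hreal

end Young

theorem lintegral_rpow_le_mul_rpow {ρ : Measure β} {u w : β → ℝ≥0∞} (hu : AEMeasurable u ρ)
    (hw : AEMeasurable w ρ) (hw_top : ∀ᵐ τ ∂ρ, w τ ≠ ⊤) (huw : ∀ᵐ τ ∂ρ, w τ = 0 → u τ = 0)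
    {Q : ℝ} (hQ : 1 ≤ Q) :
    (∫⁻ τ, u τ ∂ρ) ^ Q ≤ (∫⁻ τ, u τ ^ Q * w τ ^ (1 - Q) ∂ρ) * (∫⁻ τ, w τ ∂ρ) ^ (Q - 1) := by
  have hQ0 : 0 < Q := by linarith
  have factor : ∀ᵐ τ ∂ρ, u τ ≤ (u τ ^ Q * w τ ^ (1 - Q)) ^ Q⁻¹ * w τ ^ (1 - Q⁻¹) := by
    filter_upwards [hw_top, huw] with τ hτ hτ0
    rcases eq_or_ne (w τ) 0 with h0 | h0
    · simp [hτ0 h0]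
    rw [ENNReal.mul_rpow_of_nonneg _ _ (inv_nonneg.2 hQ0.le), ENNReal.rpow_rpow_inv hQ0.ne',
      ← ENNReal.rpow_mul, mul_assoc, ← ENNReal.rpow_add _ _ h0 hτ,
      show (1 - Q) * Q⁻¹ + (1 - Q⁻¹) = 0 by field_simp; ring, ENNReal.rpow_zero, mul_one]
  have holder := (lintegral_mono_ae factor).trans <| ENNReal.lintegral_mul_norm_pow_le
    ((hu.pow_const Q).mul (hw.pow_const (1 - Q))) hw (inv_nonneg.2 hQ0.le)
    (sub_nonneg.2 (inv_le_one_of_one_le₀ hQ)) (add_sub_cancel _ _)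
  have := ENNReal.rpow_le_rpow holder hQ0.le
  rwa [ENNReal.mul_rpow_of_nonneg _ _ hQ0.le, ENNReal.rpow_inv_rpow hQ0.ne', ← ENNReal.rpow_mul,
    show (1 - Q⁻¹) * Q = Q - 1 by field_simp] at this

section Minkowski

variable {κ : Measure α} {ρ : Measure β} [SFinite κ] {g : β → α → ℝ≥0∞}

theorem measurable_eLpNorm_uncurry_left (hg : Measurable (Function.uncurry g)) (q : ℝ≥0∞) :
    Measurable fun τ => eLpNorm (g τ) q κ := by
  rcases eq_or_ne q 0 with rfl | hq0
  · simp only [eLpNorm_exponent_zero, measurable_const]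
  rcases eq_or_ne q ⊤ with rfl | hqt
  · refine measurable_of_Iic fun a => ?_
    have null_iff (τ : β) :
        eLpNorm (g τ) ⊤ κ ≤ a ↔ κ (Prod.mk τ ⁻¹' {z | a < g z.1 z.2}) = 0 := by
      have : κ (Prod.mk τ ⁻¹' {z | a < g z.1 z.2}) = 0 ↔ ∀ᵐ x ∂κ, g τ x ≤ a := by
        simp only [ae_iff, not_le]; rfl
      rw [this]
      exact ⟨fun h => (ENNReal.ae_le_essSup (g τ)).mono fun x hx => hx.trans h,
        fun h => essSup_le_of_ae_le a h⟩
    simp only [preimage, mem_Iic, null_iff]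
    exact measurable_measure_prodMk_left (measurableSet_lt measurable_const hg)
      (measurableSet_singleton 0)
  · simp only [eLpNorm_eq_lintegral_rpow_enorm_toReal hq0 hqt, enorm_eq_self]
    exact ((hg.pow_const q.toReal).lintegral_prod_right').pow_const _

variable [SFinite ρ]

theorem ae_ae_eq_zero_of_lintegral_eq_zero (hg : Measurable (Function.uncurry g)) :
    ∀ᵐ x ∂κ, ∀ᵐ τ ∂ρ, ∫⁻ x', g τ x' ∂κ = 0 → g τ x = 0 := by
  refine (Measure.ae_ae_comm (p := fun τ x => ∫⁻ x', g τ x' ∂κ = 0 → g τ x = 0) ?_).1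
    (ae_of_all _ fun τ => ?_)
  · exact (hg.lintegral_prod_right'.comp measurable_fst (measurableSet_singleton 0)).himp
      (hg (measurableSet_singleton 0))
  · by_cases hτ : ∫⁻ x', g τ x' ∂κ = 0
    · filter_upwards [(lintegral_eq_zero_iff (hg.comp measurable_prodMk_left)).1 hτ] with x hx _
      exact hx
    · exact ae_of_all _ fun _ h => absurd h hτ

-- Hölder in `τ` against the weight `w τ = ‖g τ‖_{L^Q}` gives Minkowski's inequality directly, where
-- the usual argument would divide by a left-hand side that may be infinite.
theorem lintegral_rpow_lintegral_le (hg : Measurable (Function.uncurry g)) {Q : ℝ} (hQ : 1 ≤ Q) :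
    ∫⁻ x, (∫⁻ τ, g τ x ∂ρ) ^ Q ∂κ ≤ (∫⁻ τ, (∫⁻ x, g τ x ^ Q ∂κ) ^ Q⁻¹ ∂ρ) ^ Q := by
  have hQ0 : 0 < Q := by linarith
  set w : β → ℝ≥0∞ := fun τ => (∫⁻ x, g τ x ^ Q ∂κ) ^ Q⁻¹
  have hw : Measurable w := ((hg.pow_const Q).lintegral_prod_right').pow_const _
  have w_rpow (τ : β) : ∫⁻ x, g τ x ^ Q ∂κ = w τ ^ Q := (ENNReal.rpow_inv_rpow hQ0.ne' _).symm
  set W := ∫⁻ τ, w τ ∂ρ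
  rcases eq_or_ne W ⊤ with hW_top | hW_top
  · rw [hW_top, ENNReal.top_rpow_of_pos hQ0]; exact le_top
  have w_ne_top : ∀ᵐ τ ∂ρ, w τ ≠ ⊤ := (ae_lt_top hw hW_top).mono fun _ => LT.lt.ne
  have eq_zero : ∀ᵐ x ∂κ, ∀ᵐ τ ∂ρ, w τ = 0 → g τ x = 0 := by
    filter_upwards [ae_ae_eq_zero_of_lintegral_eq_zero (κ := κ) (ρ := ρ)
      (g := fun τ x => g τ x ^ Q) (hg.pow_const Q)] with x hx
    filter_upwards [hx] with τ hτ hw0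
    have : g τ x ^ Q = 0 := hτ (by rw [w_rpow, hw0, ENNReal.zero_rpow_of_pos hQ0])
    exact (ENNReal.rpow_eq_zero_iff_of_pos hQ0).1 this
  calc ∫⁻ x, (∫⁻ τ, g τ x ∂ρ) ^ Q ∂κ
      ≤ ∫⁻ x, (∫⁻ τ, g τ x ^ Q * w τ ^ (1 - Q) ∂ρ) * W ^ (Q - 1) ∂κ := by
        refine lintegral_mono_ae ?_
        filter_upwards [eq_zero] with x hx
        exact lintegral_rpow_le_mul_rpow (hg.comp measurable_prodMk_right).aemeasurable
          hw.aemeasurable w_ne_top hx hQ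
    _ = (∫⁻ τ, w τ ^ Q * w τ ^ (1 - Q) ∂ρ) * W ^ (Q - 1) := by
        have hgQ : Measurable fun z : α × β => g z.2 z.1 ^ Q * w z.2 ^ (1 - Q) := by fun_prop
        rw [lintegral_mul_const _ hgQ.lintegral_prod_right',
          lintegral_lintegral_swap hgQ.aemeasurable]
        congr 1
        refine lintegral_congr fun τ => ?_
        rw [← w_rpow, ← lintegral_mul_const _ (by fun_prop)]
    _ ≤ W * W ^ (Q - 1) := by
        gcongr
        refine lintegral_mono_ae ?_
        filter_upwards [w_ne_top] with τ hτ
        rcases eq_or_ne (w τ) 0 with h0 | h0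
        · simp [h0, hQ0]
        · rw [← ENNReal.rpow_add _ _ h0 hτ, add_sub_cancel, ENNReal.rpow_one]
    _ = W ^ Q := by
        nth_rw 1 [← ENNReal.rpow_one W]
        rw [← ENNReal.rpow_add_of_nonneg _ _ zero_le_one (by linarith), add_sub_cancel]

theorem eLpNorm_lintegral_le (hg : Measurable (Function.uncurry g)) {q : ℝ≥0∞} (hq : 1 ≤ q) :
    eLpNorm (fun x => ∫⁻ τ, g τ x ∂ρ) q κ ≤ ∫⁻ τ, eLpNorm (g τ) q κ ∂ρ := by
  rcases eq_or_ne q ⊤ with rfl | hqt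
  · refine essSup_le_of_ae_le _ ?_
    have : ∀ᵐ x ∂κ, ∀ᵐ τ ∂ρ, g τ x ≤ eLpNorm (g τ) ⊤ κ :=
      (Measure.ae_ae_comm (p := fun τ x => g τ x ≤ eLpNorm (g τ) ⊤ κ) (measurableSet_le hg
        ((measurable_eLpNorm_uncurry_left hg ⊤).comp measurable_fst))).1
        (ae_of_all _ fun τ => ENNReal.ae_le_essSup (g τ))
    filter_upwards [this] with x hx
    exact lintegral_mono_ae hx
  · have hq0 : q ≠ 0 := (zero_lt_one.trans_le hq).ne'
    simp only [eLpNorm_eq_lintegral_rpow_enorm_toReal hq0 hqt, enorm_eq_self, one_div]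
    rw [ENNReal.rpow_inv_le_iff (toReal_pos hq0 hqt)]
    exact lintegral_rpow_lintegral_le hg (toReal_mono hqt hq)

end Minkowski

end IntegralInequalities

section PowersOfTwo

theorem two_rpow_add (x y : ℝ) : (2 : ℝ≥0∞) ^ (x + y) = 2 ^ x * 2 ^ y :=
  ENNReal.rpow_add _ _ two_ne_zero ofNat_ne_top

theorem ofReal_two_rpow (x : ℝ) : ENNReal.ofReal ((2 : ℝ) ^ x) = (2 : ℝ≥0∞) ^ x := by
  rw [← ENNReal.ofReal_rpow_of_pos two_pos, ENNReal.ofReal_ofNat]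

theorem ofReal_two_zpow_rpow (j : ℤ) (x : ℝ) :
    ENNReal.ofReal (((2 : ℝ) ^ j) ^ x) = (2 : ℝ≥0∞) ^ (j * x) := by
  rw [← Real.rpow_intCast, ← Real.rpow_mul two_pos.le, ofReal_two_rpow]

theorem tsum_two_rpow_neg_ne_top {x : ℝ} (hx : 0 < x) :
    ∑' i : ℕ, (2 : ℝ≥0∞) ^ (-(i * x)) ≠ ⊤ := by
  have geometric (i : ℕ) : (2 : ℝ≥0∞) ^ (-(i * x)) = (2 ^ (-x)) ^ i := by
    rw [← ENNReal.rpow_natCast, ← ENNReal.rpow_mul]; ring_nf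
  simp only [geometric, ENNReal.tsum_geometric]
  refine ENNReal.inv_ne_top.2 (tsub_pos_of_lt ?_).ne'
  exact ENNReal.rpow_lt_one_of_one_lt_of_neg one_lt_two (neg_neg_of_pos hx)

end PowersOfTwo

section Annuli

variable {n : ℕ}

theorem measurableSet_annulus (j : ℤ) : MeasurableSet (annulus n j) :=
  (measurableSet_le measurable_const measurable_norm).inter
    (measurableSet_lt measurable_norm measurable_const)

theorem exists_mem_annulus {x : Euc n} (hx : x ≠ 0) : ∃ j, x ∈ annulus n j := by
  obtain ⟨j, hj⟩ := exists_mem_Ico_zpow (norm_pos_iff.2 hx) one_lt_two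
  exact ⟨j + 1, by simpa only [annulus, mem_ofPred_eq, add_sub_cancel_right, mem_Ico] using hj⟩

theorem ball_subset_iUnion_annulus (k : ℤ) :
    Metric.ball (0 : Euc n) (2 ^ k) ⊆ {0} ∪ ⋃ i : ℕ, annulus n (k - i) := by
  intro x hx
  rcases eq_or_ne x 0 with rfl | h0
  · exact Or.inl rfl
  obtain ⟨j, hj⟩ := exists_mem_annulus h0
  have : j - 1 < k :=
    (zpow_lt_zpow_iff_right₀ _root_.one_lt_two).1 (hj.1.trans_lt (by simpa using hx))
  refine Or.inr (mem_iUnion.2 ⟨(k - j).toNat, ?_⟩)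
  rwa [show k - (k - j).toNat = j by omega]

theorem compl_ball_subset_iUnion_annulus (k : ℤ) :
    (Metric.ball (0 : Euc n) (2 ^ k))ᶜ ⊆ ⋃ i : ℕ, annulus n (k + 1 + i) := by
  intro x hx
  have hx : (2 : ℝ) ^ k ≤ ‖x‖ := by simpa using hx
  obtain ⟨j, hj⟩ := exists_mem_annulus (norm_pos_iff.1 ((zpow_pos two_pos k).trans_le hx))
  have : k < j := (zpow_lt_zpow_iff_right₀ _root_.one_lt_two).1 (hx.trans_lt hj.2)
  refine mem_iUnion.2 ⟨(j - k - 1).toNat, ?_⟩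
  rwa [show k + 1 + (j - k - 1).toNat = j by omega]

theorem volume_annulus_le :
    ∃ c : ℝ≥0, ∀ j : ℤ, volume (annulus n j) ≤ c * (2 : ℝ≥0∞) ^ ((j : ℝ) * n) := by
  refine ⟨(volume (Metric.ball (0 : Euc n) 1)).toNNReal, fun j => ?_⟩
  rw [coe_toNNReal measure_ball_lt_top.ne]
  calc volume (annulus n j) ≤ volume (Metric.ball (0 : Euc n) (2 ^ j)) :=
        measure_mono fun x hx => by simpa using hx.2
    _ = volume (Metric.ball (0 : Euc n) 1) * (2 : ℝ≥0∞) ^ ((j : ℝ) * n) := by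
        rw [Measure.addHaar_ball_of_pos _ _ (zpow_pos two_pos j), mul_comm,
          finrank_euclideanSpace_fin, ← Real.rpow_natCast, ofReal_two_zpow_rpow]

variable {E : Type*} [TopologicalSpace E] [ContinuousENorm E]

theorem eLpNorm_restrict_annulus_le {p q : ℝ≥0∞} (hq : q ≠ 0) (hqp : q ≤ p) :
    ∃ c : ℝ≥0, ∀ (j : ℤ) (f : Euc n → E), AEStronglyMeasurable f →
      eLpNorm f q (volume.restrict (annulus n j)) ≤
        c * (2 : ℝ≥0∞) ^ (j * (n * ((q⁻¹).toReal - (p⁻¹).toReal))) *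
          eLpNorm f p (volume.restrict (annulus n j)) := by
  obtain ⟨c, hc⟩ := volume_annulus_le (n := n)
  have gap : 0 ≤ (q⁻¹).toReal - (p⁻¹).toReal :=
    sub_nonneg.2 (toReal_mono (inv_ne_top.2 hq) (ENNReal.inv_le_inv.2 hqp))
  refine ⟨c ^ ((q⁻¹).toReal - (p⁻¹).toReal), fun j f hf => ?_⟩
  refine (eLpNorm_le_eLpNorm_mul_rpow_measure_univ hqp hf.restrict).trans ?_
  rw [mul_comm, one_div, one_div, ← toReal_inv, ← toReal_inv, Measure.restrict_apply_univ]
  gcongr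
  calc volume (annulus n j) ^ ((q⁻¹).toReal - (p⁻¹).toReal)
      ≤ (c * (2 : ℝ≥0∞) ^ ((j : ℝ) * n)) ^ ((q⁻¹).toReal - (p⁻¹).toReal) := by
        gcongr; exact hc j
    _ = _ := by
        rw [ENNReal.mul_rpow_of_nonneg _ _ gap, ← ENNReal.rpow_mul, mul_assoc,
          ENNReal.coe_rpow_of_nonneg _ gap]

end Annuli

section HerzBlocks

variable {n : ℕ} {E : Type*}

/-- The `j`-th dyadic contribution `2^{js} ‖f χ_{A_j}‖_{L^q}` to the Herz quasi-norm of `f`. -/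
def herzBlock [ENorm E] (n : ℕ) (s : ℝ) (q : ℝ≥0∞) (f : Euc n → E) (j : ℤ) : ℝ≥0∞ :=
  2 ^ (j * s) * eLpNorm f q (volume.restrict (annulus n j))

theorem herzBlock_mono_enorm {F : Type*} [ENorm E] [ENorm F] {s : ℝ} {q : ℝ≥0∞} {f : Euc n → E}
    {g : Euc n → F} (hfg : ∀ᵐ x, ‖f x‖ₑ ≤ ‖g x‖ₑ) (j : ℤ) :
    herzBlock n s q f j ≤ herzBlock n s q g j :=
  mul_le_mul_right (eLpNorm_mono_enorm_ae (ae_restrict_of_ae hfg)) _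

theorem ofReal_mul_eLpNorm_indicator_eq_herzBlock (s : ℝ) (q : ℝ≥0∞) (f : Euc n → ℝ) (j : ℤ) :
    ENNReal.ofReal ((2 : ℝ) ^ ((j : ℝ) * s)) * eLpNorm ((annulus n j).indicator f) q volume =
      herzBlock n s q f j := by
  rw [ofReal_two_rpow, eLpNorm_indicator_eq_eLpNorm_restrict (measurableSet_annulus j), herzBlock]

theorem herzNorm_top_eq_iSup (s : ℝ) (q : ℝ≥0∞) (f : Euc n → ℝ) :
    herzNorm n s q ⊤ f = ⨆ j, herzBlock n s q f j := by
  simp only [herzNorm, if_true, ofReal_mul_eLpNorm_indicator_eq_herzBlock]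

theorem herzNorm_eq_tsum_rpow (s : ℝ) (q : ℝ≥0∞) {r : ℝ≥0∞} (hr : r ≠ ⊤) (f : Euc n → ℝ) :
    herzNorm n s q r f = (∑' j, herzBlock n s q f j ^ r.toReal) ^ (1 / r.toReal) := by
  simp only [herzNorm, if_neg hr, ofReal_mul_eLpNorm_indicator_eq_herzBlock]

theorem le_tsum_rpow {ι : Type*} (a : ι → ℝ≥0∞) {r : ℝ} (hr : 0 < r) (i : ι) :
    a i ≤ (∑' j, a j ^ r) ^ (1 / r) := by
  rw [one_div, ENNReal.le_rpow_inv_iff hr]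
  exact ENNReal.le_tsum (f := fun j => a j ^ r) i

theorem tsum_le_tsum_rpow {ι : Type*} (a : ι → ℝ≥0∞) {r : ℝ} (hr : 0 < r) (hr1 : r ≤ 1) :
    ∑' i, a i ≤ (∑' i, a i ^ r) ^ (1 / r) := by
  set S := (∑' i, a i ^ r) ^ (1 / r) with hS
  have hr1' : 0 ≤ 1 - r := sub_nonneg.2 hr1
  calc ∑' i, a i = ∑' i, a i ^ r * a i ^ (1 - r) := by
        simp only [← ENNReal.rpow_add_of_nonneg _ _ hr.le hr1', add_sub_cancel, ENNReal.rpow_one]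
    _ ≤ ∑' i, a i ^ r * S ^ (1 - r) := by
        gcongr with i; exact le_tsum_rpow a hr i
    _ = S ^ r * S ^ (1 - r) := by
        rw [ENNReal.tsum_mul_right, hS, one_div, ENNReal.rpow_inv_rpow hr.ne']
    _ = S := by
        rw [← ENNReal.rpow_add_of_nonneg _ _ hr.le hr1', add_sub_cancel, ENNReal.rpow_one]

theorem herzBlock_le_herzNorm (s : ℝ) (q : ℝ≥0∞) {r : ℝ≥0∞} (hr : 0 < r) (f : Euc n → ℝ) (j : ℤ) :
    herzBlock n s q f j ≤ herzNorm n s q r f := by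
  rcases eq_or_ne r ⊤ with rfl | hrt
  · exact herzNorm_top_eq_iSup s q f ▸ le_iSup (herzBlock n s q f) j
  · exact herzNorm_eq_tsum_rpow s q hrt f ▸ le_tsum_rpow _ (toReal_pos hr.ne' hrt) j

theorem tsum_herzBlock_le_herzNorm (s : ℝ) (q : ℝ≥0∞) {r : ℝ≥0∞} (hr : 0 < r) (hr1 : r ≤ 1)
    (f : Euc n → ℝ) : ∑' j, herzBlock n s q f j ≤ herzNorm n s q r f := by
  have hrt : r ≠ ⊤ := (hr1.trans_lt one_lt_top).ne
  rw [herzNorm_eq_tsum_rpow s q hrt]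
  exact tsum_le_tsum_rpow _ (toReal_pos hr.ne' hrt) (toReal_mono one_ne_top hr1)

theorem lintegral_enorm_annulus_le [TopologicalSpace E] [ContinuousENorm E] (s : ℝ) {p : ℝ≥0∞}
    (hp : 1 ≤ p) :
    ∃ c : ℝ≥0, ∀ (j : ℤ) (f : Euc n → E), AEStronglyMeasurable f →
      ∫⁻ x in annulus n j, ‖f x‖ₑ ≤
        c * (2 : ℝ≥0∞) ^ (j * (n * (1 - (p⁻¹).toReal) - s)) * herzBlock n s p f j := by
  obtain ⟨c, hc⟩ := eLpNorm_restrict_annulus_le (n := n) (E := E) one_ne_zero hp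
  refine ⟨c, fun j f hf => ?_⟩
  rw [← eLpNorm_one_eq_lintegral_enorm]
  refine (hc j f hf).trans_eq ?_
  have : j * (n * (((1 : ℝ≥0∞)⁻¹).toReal - (p⁻¹).toReal)) =
      j * (n * (1 - (p⁻¹).toReal) - s) + j * s := by simp only [inv_one, toReal_one]; ring
  rw [this, two_rpow_add, herzBlock]
  ring

theorem tsum_two_rpow_mul_herzBlock_le {s N : ℝ} {q r : ℝ≥0∞} (hr : 0 < r)
    (hN : 0 < N ∨ N = 0 ∧ r ≤ 1) :
    ∃ c : ℝ≥0, ∀ (k : ℤ) (f : Euc n → ℝ),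
      ∑' i : ℕ, (2 : ℝ≥0∞) ^ (-(i * N)) * herzBlock n s q f (k - i) ≤
        c * herzNorm n s q r f := by
  rcases hN with hN | ⟨rfl, hr1⟩
  · refine ⟨(∑' i : ℕ, (2 : ℝ≥0∞) ^ (-(i * N))).toNNReal, fun k f => ?_⟩
    rw [coe_toNNReal (tsum_two_rpow_neg_ne_top hN), ← ENNReal.tsum_mul_right]
    gcongr with i
    exact herzBlock_le_herzNorm s q hr f _
  · refine ⟨1, fun k f => ?_⟩
    simp only [mul_zero, neg_zero, ENNReal.rpow_zero, one_mul, ENNReal.coe_one]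
    exact (ENNReal.tsum_comp_le_tsum_of_injective (fun i j hij => by simpa using hij) _).trans
      (tsum_herzBlock_le_herzNorm s q hr hr1 f)

theorem lintegral_enorm_ball_le [NeZero n] {s : ℝ} {p r : ℝ≥0∞} (hp : 1 ≤ p) (hr : 0 < r)
    (hs : s + n * (p⁻¹).toReal < n ∨ s + n * (p⁻¹).toReal = n ∧ r ≤ 1) :
    ∃ c : ℝ≥0, ∀ (k : ℤ) (f : Euc n → ℝ), Measurable f →
      ∫⁻ x in Metric.ball 0 (2 ^ k), ‖f x‖ₑ ≤
        c * (2 : ℝ≥0∞) ^ (k * (n * (1 - (p⁻¹).toReal) - s)) * herzNorm n s p r f := by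
  set N := n * (1 - (p⁻¹).toReal) - s with hN
  obtain ⟨c₁, hc₁⟩ := lintegral_enorm_annulus_le (n := n) (E := ℝ) s hp
  obtain ⟨c₂, hc₂⟩ := tsum_two_rpow_mul_herzBlock_le (n := n) (s := s) (N := N) (q := p) hr
    (hs.imp (fun h => by linarith) (And.imp_left fun h => by linarith))
  refine ⟨c₁ * c₂, fun k f hf => ?_⟩
  have peel (i : ℕ) : ∫⁻ x in annulus n (k - i), ‖f x‖ₑ ≤
      c₁ * (2 : ℝ≥0∞) ^ (k * N) * (2 ^ (-(i * N)) * herzBlock n s p f (k - i)) := by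
    refine (hc₁ (k - i) f hf.aestronglyMeasurable).trans_eq ?_
    rw [← hN, show ((k - i : ℤ) : ℝ) * N = k * N + -(i * N) by push_cast; ring, two_rpow_add]
    ring
  calc ∫⁻ x in Metric.ball 0 (2 ^ k), ‖f x‖ₑ
      ≤ ∫⁻ x in {0} ∪ ⋃ i : ℕ, annulus n (k - i), ‖f x‖ₑ :=
        lintegral_mono_set (ball_subset_iUnion_annulus k)
    _ ≤ (∫⁻ x in {0}, ‖f x‖ₑ) + ∫⁻ x in ⋃ i : ℕ, annulus n (k - i), ‖f x‖ₑ :=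
        lintegral_union_le _ _ _
    _ = ∫⁻ x in ⋃ i : ℕ, annulus n (k - i), ‖f x‖ₑ := by
        rw [setLIntegral_measure_zero _ _ (measure_singleton 0), zero_add]
    _ ≤ ∑' i : ℕ, ∫⁻ x in annulus n (k - i), ‖f x‖ₑ := lintegral_iUnion_le _ _
    _ ≤ ∑' i : ℕ, c₁ * (2 : ℝ≥0∞) ^ (k * N) * (2 ^ (-(i * N)) * herzBlock n s p f (k - i)) :=
        ENNReal.tsum_le_tsum peel
    _ ≤ c₁ * (2 : ℝ≥0∞) ^ (k * N) * (c₂ * herzNorm n s p r f) := by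
        rw [ENNReal.tsum_mul_left]; gcongr; exact hc₂ k f
    _ = _ := by push_cast; ring

end HerzBlocks

section CrossoverWeight

/-- The time profile that equals `s ^ (-a)` for `s ≤ ρ` and decays like `s ^ (-b)`, with matching
constant, for `s ≥ ρ` (when `a ≤ b`). It bounds norms of the heat kernel at time `s` that are
localised to the parabolic scale `ρ = R²`. -/
def crossoverWeight (a b ρ s : ℝ) : ℝ :=
  min (s ^ (-a)) (ρ ^ (b - a) * s ^ (-b))

theorem measurable_crossoverWeight (a b ρ : ℝ) : Measurable (crossoverWeight a b ρ) := by
  unfold crossoverWeight; fun_prop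

theorem lintegral_crossoverWeight_le {a b ρ : ℝ} (ha : a < 1) (hb : 1 < b) (hρ : 0 < ρ) :
    ∫⁻ s in Ioi (0 : ℝ), ENNReal.ofReal (crossoverWeight a b ρ s) ≤
      ENNReal.ofReal ((1 / (1 - a) + 1 / (b - 1)) * ρ ^ (1 - a)) := by
  have ha' : 0 < 1 - a := sub_pos.2 ha
  have : 0 < b - 1 := sub_pos.2 hb
  have short_time : ∫⁻ s in Ioc 0 ρ, ENNReal.ofReal (crossoverWeight a b ρ s) ≤
      ENNReal.ofReal (1 / (1 - a) * ρ ^ (1 - a)) := by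
    have integrable : IntegrableOn (fun s : ℝ => s ^ (-a)) (Ioc 0 ρ) :=
      (intervalIntegrable_iff_integrableOn_Ioc_of_le hρ.le).1
        (intervalIntegral.intervalIntegrable_rpow' (by linarith))
    refine (setLIntegral_mono' measurableSet_Ioc fun s _ =>
      ENNReal.ofReal_le_ofReal (min_le_left _ _)).trans_eq ?_
    rw [← ofReal_integral_eq_lintegral_ofReal integrable
        (ae_restrict_of_forall_mem measurableSet_Ioc fun s hs => Real.rpow_nonneg hs.1.le _),
      ← intervalIntegral.integral_of_le hρ.le, integral_rpow (Or.inl (by linarith)),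
      neg_add_eq_sub, Real.zero_rpow ha'.ne', sub_zero, one_div_mul_eq_div]
  have long_time : ∫⁻ s in Ioi ρ, ENNReal.ofReal (crossoverWeight a b ρ s) ≤
      ENNReal.ofReal (1 / (b - 1) * ρ ^ (1 - a)) := by
    have integrable : IntegrableOn (fun s : ℝ => ρ ^ (b - a) * s ^ (-b)) (Ioi ρ) :=
      (integrableOn_Ioi_rpow_of_lt (neg_lt_neg hb) hρ).const_mul _
    refine (setLIntegral_mono' measurableSet_Ioi fun s _ =>
      ENNReal.ofReal_le_ofReal (min_le_right _ _)).trans_eq ?_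
    rw [← ofReal_integral_eq_lintegral_ofReal integrable
        (ae_restrict_of_forall_mem measurableSet_Ioi fun s hs => by
          have : 0 < s := hρ.trans hs
          positivity),
      integral_const_mul, integral_Ioi_rpow_of_lt (neg_lt_neg hb) hρ,
      show -b + 1 = -(b - 1) by ring, neg_div_neg_eq, ← mul_div_assoc, ← Real.rpow_add hρ,
      one_div_mul_eq_div]
    ring_nf
  rw [← Ioc_union_Ioi_eq_Ioi hρ.le, add_mul, ENNReal.ofReal_add (by positivity) (by positivity)]
  exact (lintegral_union_le _ _ _).trans (add_le_add short_time long_time)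

theorem lintegral_crossoverWeight_sub_le {a b : ℝ} (ha : a < 1) (hb : 1 < b) :
    ∃ c : ℝ≥0, ∀ ρ t : ℝ, 0 < ρ →
      ∫⁻ τ in Ioo 0 t, ENNReal.ofReal (crossoverWeight a b ρ (t - τ)) ≤
        c * ENNReal.ofReal (ρ ^ (1 - a)) := by
  refine ⟨(1 / (1 - a) + 1 / (b - 1)).toNNReal, fun ρ t hρ => ?_⟩
  have hc : 0 ≤ 1 / (1 - a) + 1 / (b - 1) :=
    add_nonneg (one_div_nonneg.2 (sub_pos.2 ha).le) (one_div_nonneg.2 (sub_pos.2 hb).le)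
  have reflect : (fun τ => t - τ) ⁻¹' Ioo 0 t = Ioo 0 t := by
    rw [preimage_const_sub_Ioo, sub_self, sub_zero]
  calc ∫⁻ τ in Ioo 0 t, ENNReal.ofReal (crossoverWeight a b ρ (t - τ))
      = ∫⁻ s in Ioo 0 t, ENNReal.ofReal (crossoverWeight a b ρ s) := by
        conv_lhs => rw [← reflect]
        exact (Measure.measurePreserving_sub_left volume t).setLIntegral_comp_preimage
          measurableSet_Ioo (measurable_crossoverWeight a b ρ).ennreal_ofReal
    _ ≤ ∫⁻ s in Ioi 0, ENNReal.ofReal (crossoverWeight a b ρ s) :=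
        lintegral_mono_set Ioo_subset_Ioi_self
    _ ≤ _ := lintegral_crossoverWeight_le ha hb hρ
    _ = _ := ENNReal.ofReal_mul hc

end CrossoverWeight

section HeatKernel

variable {n : ℕ} {s : ℝ}

theorem heatKernel_nonneg (hs : 0 < s) (x y : Euc n) : 0 ≤ heatKernel n s x y := by
  unfold heatKernel; positivity

theorem heatKernel_eq_heatKernel_sub (s : ℝ) (x y : Euc n) :
    heatKernel n s x y = heatKernel n s (x - y) 0 := by
  simp only [heatKernel, sub_zero]

theorem measurable_heatKernel :
    Measurable fun z : ℝ × Euc n × Euc n => heatKernel n z.1 z.2.1 z.2.2 := by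
  unfold heatKernel; fun_prop

theorem heatKernel_le_rpow (hs : 0 < s) (x y : Euc n) :
    heatKernel n s x y ≤ s ^ (-(n : ℝ) / 2) := by
  have hexp : Real.exp (-‖x - y‖ ^ 2 / (4 * s)) ≤ 1 := by
    rw [Real.exp_le_one_iff, neg_div]
    exact neg_nonpos.2 (by positivity)
  have hbase : (4 * Real.pi * s) ^ (-(n : ℝ) / 2) ≤ s ^ (-(n : ℝ) / 2) :=
    Real.rpow_le_rpow_of_nonpos hs (by nlinarith [Real.pi_gt_three])
      (div_nonpos_of_nonpos_of_nonneg (neg_nonpos.2 n.cast_nonneg) two_pos.le)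
  exact (mul_le_of_le_one_right (by positivity) hexp).trans hbase

theorem rpow_le_rpow_self_mul_exp {a y : ℝ} (ha : 0 < a) (hy : 0 ≤ y) :
    y ^ a ≤ a ^ a * Real.exp y := by
  have base : y / a ≤ Real.exp (y / a) := by linarith [Real.add_one_le_exp (y / a)]
  calc y ^ a = a ^ a * (y / a) ^ a := by
        rw [← Real.mul_rpow ha.le (by positivity), mul_div_cancel₀ _ ha.ne']
    _ ≤ a ^ a * Real.exp (y / a) ^ a := by gcongr
    _ = a ^ a * Real.exp y := by rw [← Real.exp_mul, div_mul_cancel₀ _ ha.ne']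

theorem heatKernel_le_mul_norm_rpow [NeZero n] (hs : 0 < s) {x y : Euc n} (hxy : x ≠ y) :
    heatKernel n s x y ≤
      ((n : ℝ) / 2) ^ ((n : ℝ) / 2) * Real.pi ^ (-(n : ℝ) / 2) * ‖x - y‖ ^ (-(n : ℝ)) := by
  have hR : 0 < ‖x - y‖ := norm_pos_iff.2 (sub_ne_zero.2 hxy)
  set R := ‖x - y‖
  set u := R ^ 2 / (4 * s) with hu
  have hn : (0 : ℝ) < n / 2 := by have := NeZero.pos n; positivity
  have rescale : (4 * Real.pi * s) ^ (-(n : ℝ) / 2) =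
      Real.pi ^ (-(n : ℝ) / 2) * R ^ (-(n : ℝ)) * u ^ ((n : ℝ) / 2) := by
    rw [show 4 * Real.pi * s = Real.pi * (R ^ 2 * u⁻¹) by rw [hu]; field_simp,
      Real.mul_rpow (by positivity) (by positivity), Real.mul_rpow (by positivity) (by positivity),
      ← Real.rpow_natCast R 2, ← Real.rpow_mul hR.le, Real.inv_rpow (by positivity), neg_div,
      Real.rpow_neg (x := u) (by positivity), inv_inv, ← mul_assoc]
    congr 3
    push_cast; ring
  have exponent : -‖x - y‖ ^ 2 / (4 * s) = -u := neg_div _ _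
  calc heatKernel n s x y
      = Real.pi ^ (-(n : ℝ) / 2) * R ^ (-(n : ℝ)) * (u ^ ((n : ℝ) / 2) * Real.exp (-u)) := by
        rw [heatKernel, rescale, exponent]; ring
    _ ≤ Real.pi ^ (-(n : ℝ) / 2) * R ^ (-(n : ℝ)) * ((n : ℝ) / 2) ^ ((n : ℝ) / 2) := by
        gcongr
        rw [Real.exp_neg, ← div_eq_mul_inv, div_le_iff₀ (Real.exp_pos u)]
        exact rpow_le_rpow_self_mul_exp hn (by positivity)
    _ = _ := by ring

theorem enorm_heatKernel_le_crossoverWeight [NeZero n] :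
    ∃ c : ℝ≥0, ∀ (D s : ℝ) (x y : Euc n), 0 < D → 0 < s → D ≤ ‖x - y‖ →
      ‖heatKernel n s x y‖ₑ ≤ c * ENNReal.ofReal (D ^ (-(n : ℝ))) *
        ENNReal.ofReal (crossoverWeight 0 (n / 2) (D ^ 2) s) := by
  set κ : ℝ := ((n : ℝ) / 2) ^ ((n : ℝ) / 2) * Real.pi ^ (-(n : ℝ) / 2)
  have : 0 ≤ κ := by positivity
  refine ⟨(max 1 κ).toNNReal, fun D s x y hD hs hxy => ?_⟩
  have hxy_ne : x ≠ y := sub_ne_zero.1 (norm_pos_iff.1 (hD.trans_le hxy))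
  have spatial : heatKernel n s x y ≤ max 1 κ * D ^ (-(n : ℝ)) := by
    refine (heatKernel_le_mul_norm_rpow hs hxy_ne).trans ?_
    gcongr ?_ * ?_
    · exact le_max_right _ _
    · exact Real.rpow_le_rpow_of_nonpos hD hxy (neg_nonpos.2 n.cast_nonneg)
  have temporal : heatKernel n s x y ≤ max 1 κ * s ^ (-(n : ℝ) / 2) :=
    (heatKernel_le_rpow hs x y).trans (le_mul_of_one_le_left (by positivity) (le_max_left _ _))
  have hDn : D ^ (-(n : ℝ)) * (D ^ 2) ^ ((n : ℝ) / 2 - 0) = 1 := by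
    rw [← Real.rpow_natCast D 2, ← Real.rpow_mul hD.le, ← Real.rpow_add hD]
    rw [show -(n : ℝ) + ((2 : ℕ) : ℝ) * (n / 2 - 0) = 0 by push_cast; ring, Real.rpow_zero]
  rw [Real.enorm_of_nonneg (heatKernel_nonneg hs x y), ENNReal.ofNNReal_toNNReal,
    ← ENNReal.ofReal_mul (by positivity), ← ENNReal.ofReal_mul (by positivity), crossoverWeight,
    neg_zero, Real.rpow_zero, mul_min_of_nonneg _ _ (by positivity), mul_one, ← mul_assoc,
    mul_assoc (max 1 κ), hDn, mul_one, ← neg_div]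
  exact ENNReal.ofReal_le_ofReal (le_min spatial temporal)

theorem lintegral_heatKernel (hs : 0 < s) :
    ∫⁻ x : Euc n, ENNReal.ofReal (heatKernel n s x 0) = 1 := by
  have hb : 0 < (4 * s)⁻¹ := by positivity
  have gaussian := GaussianFourier.integral_rexp_neg_mul_sq_norm (V := Euc n) hb
  have gaussian_pos : 0 < (Real.pi / (4 * s)⁻¹) ^ ((n : ℝ) / 2) := by positivity
  rw [finrank_euclideanSpace_fin] at gaussian
  have integrable : Integrable fun x : Euc n => Real.exp (-(4 * s)⁻¹ * ‖x‖ ^ 2) :=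
    .of_integral_ne_zero (gaussian ▸ gaussian_pos.ne')
  have kernel (x : Euc n) : heatKernel n s x 0 =
      (4 * Real.pi * s) ^ (-(n : ℝ) / 2) * Real.exp (-(4 * s)⁻¹ * ‖x‖ ^ 2) := by
    rw [heatKernel, sub_zero]; ring_nf
  simp only [kernel]
  rw [← ofReal_integral_eq_lintegral_ofReal (integrable.const_mul _)
      (ae_of_all _ fun x => by dsimp only [Pi.zero_apply]; positivity),
    integral_const_mul, gaussian, div_inv_eq_mul,
    show Real.pi * (4 * s) = 4 * Real.pi * s by ring, ← Real.rpow_add (by positivity),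
    neg_div, neg_add_cancel, Real.rpow_zero, ENNReal.ofReal_one]

theorem eLpNorm_heatKernel_le {m : ℝ≥0∞} (hm : 1 ≤ m) (hmt : m ≠ ⊤) (hs : 0 < s) :
    eLpNorm (fun x : Euc n => heatKernel n s x 0) m volume ≤
      ENNReal.ofReal (s ^ (-(n / 2 * (1 - (m⁻¹).toReal)))) := by
  have hM : 1 ≤ m.toReal := toReal_mono hmt hm
  have hM0 : 0 < m.toReal := zero_lt_one.trans_le hM
  set K := ENNReal.ofReal (s ^ (-(n : ℝ) / 2)) with hK
  have interpolate (x : Euc n) : ‖heatKernel n s x 0‖ₑ ^ m.toReal ≤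
      K ^ (m.toReal - 1) * ENNReal.ofReal (heatKernel n s x 0) := by
    rw [Real.enorm_of_nonneg (heatKernel_nonneg hs x 0)]
    set G := ENNReal.ofReal (heatKernel n s x 0)
    calc G ^ m.toReal = G ^ (m.toReal - 1) * G := by
          nth_rw 3 [← ENNReal.rpow_one G]
          rw [← ENNReal.rpow_add_of_nonneg _ _ (sub_nonneg.2 hM) zero_le_one, sub_add_cancel]
      _ ≤ K ^ (m.toReal - 1) * G := by
          gcongr
          exact ENNReal.ofReal_le_ofReal (heatKernel_le_rpow hs x 0)
  rw [eLpNorm_eq_lintegral_rpow_enorm_toReal (zero_lt_one.trans_le hm).ne' hmt, one_div,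
    ENNReal.rpow_inv_le_iff hM0]
  calc ∫⁻ x : Euc n, ‖heatKernel n s x 0‖ₑ ^ m.toReal
      ≤ ∫⁻ x : Euc n, K ^ (m.toReal - 1) * ENNReal.ofReal (heatKernel n s x 0) :=
        lintegral_mono interpolate
    _ = K ^ (m.toReal - 1) := by
        have : Measurable fun x : Euc n => heatKernel n s x 0 :=
          measurable_heatKernel.comp (by fun_prop : Measurable fun x : Euc n => (s, x, (0 : Euc n)))
        rw [lintegral_const_mul _ this.ennreal_ofReal, lintegral_heatKernel hs, mul_one]
    _ = _ := by
        rw [hK, ENNReal.ofReal_rpow_of_pos (by positivity), ENNReal.ofReal_rpow_of_pos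
          (by positivity), ← Real.rpow_mul hs.le, ← Real.rpow_mul hs.le, toReal_inv]
        congr 2
        field_simp

theorem eLpNorm_indicator_ball_heatKernel_le {m : ℝ≥0∞} (hm : 1 ≤ m) (hmt : m ≠ ⊤) :
    ∃ c : ℝ≥0, ∀ R s : ℝ, 0 < R → 0 < s →
      eLpNorm ((Metric.ball (0 : Euc n) R).indicator fun x => heatKernel n s x 0) m volume ≤
        c * ENNReal.ofReal
          (crossoverWeight (n / 2 * (1 - (m⁻¹).toReal)) (n / 2) (R ^ 2) s) := by
  set V := volume (Metric.ball (0 : Euc n) 1) ^ (m⁻¹).toReal with hV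
  have hVt : V ≠ ⊤ := ENNReal.rpow_ne_top_of_nonneg toReal_nonneg measure_ball_lt_top.ne
  refine ⟨max 1 V.toNNReal, fun R s hR hs => ?_⟩
  have global := (eLpNorm_indicator_le (s := Metric.ball (0 : Euc n) R) _).trans
    (eLpNorm_heatKernel_le (n := n) hm hmt hs)
  have near_origin : eLpNorm ((Metric.ball (0 : Euc n) R).indicator fun x => heatKernel n s x 0) m
      volume ≤ V * ENNReal.ofReal (R ^ (n * (m⁻¹).toReal) * s ^ (-(n : ℝ) / 2)) := by
    rw [eLpNorm_indicator_eq_eLpNorm_restrict measurableSet_ball]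
    refine (eLpNorm_le_of_ae_bound (C := s ^ (-(n : ℝ) / 2)) (ae_of_all _ fun x => ?_)).trans_eq ?_
    · rw [Real.norm_of_nonneg (heatKernel_nonneg hs x 0)]
      exact heatKernel_le_rpow hs x 0
    · rw [Measure.restrict_apply_univ, Measure.addHaar_ball_of_pos _ _ hR,
        finrank_euclideanSpace_fin, ← toReal_inv, ENNReal.mul_rpow_of_nonneg _ _ toReal_nonneg,
        ← hV, ENNReal.ofReal_rpow_of_nonneg (by positivity) toReal_nonneg, ← Real.rpow_natCast,
        ← Real.rpow_mul hR.le, ENNReal.ofReal_mul (by positivity)]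
      ring
  have hRn : (R ^ 2) ^ ((n : ℝ) / 2 - n / 2 * (1 - (m⁻¹).toReal)) = R ^ (n * (m⁻¹).toReal) := by
    rw [← Real.rpow_natCast R 2, ← Real.rpow_mul hR.le]
    congr 1
    push_cast; ring
  rw [crossoverWeight, hRn, ENNReal.ofReal_min, ENNReal.coe_max, ENNReal.coe_one,
    coe_toNNReal hVt, mul_min, ← neg_div]
  refine le_min (global.trans (le_mul_of_one_le_left' (le_max_left _ _))) (near_origin.trans ?_)
  gcongr
  exact le_max_right _ _

end HeatKernel

section DuhamelMajorant

variable {n : ℕ} {t : ℝ} {A B : Set (Euc n)} {f : ℝ → Euc n → ℝ}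

/-- The contribution of sources located in `A` to the absolute Duhamel integral
`∫₀ᵗ ∫ |G_{t-τ}(x - y) f(τ, y)| dy dτ`, where `G` is the heat kernel. -/
def duhamelMajorant (n : ℕ) (t : ℝ) (A : Set (Euc n)) (f : ℝ → Euc n → ℝ) (x : Euc n) : ℝ≥0∞ :=
  ∫⁻ τ in Ioo 0 t, ∫⁻ y in A, ‖heatKernel n (t - τ) x y‖ₑ * ‖f τ y‖ₑ

theorem measurable_enorm_heatKernel_mul (hf : Measurable (Function.uncurry f)) :
    Measurable fun z : (Euc n × ℝ) × Euc n =>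
      ‖heatKernel n (t - z.1.2) z.1.1 z.2‖ₑ * ‖f z.1.2 z.2‖ₑ :=
  (measurable_heatKernel.comp (by fun_prop :
      Measurable fun z : (Euc n × ℝ) × Euc n => (t - z.1.2, z.1.1, z.2))).enorm.mul
    (hf.comp (by fun_prop : Measurable fun z : (Euc n × ℝ) × Euc n => (z.1.2, z.2))).enorm

theorem measurable_duhamelMajorant (hf : Measurable (Function.uncurry f)) :
    Measurable (duhamelMajorant n t A f) :=
  (measurable_enorm_heatKernel_mul hf).lintegral_prod_right'.lintegral_prod_right'

theorem duhamelMajorant_mono (hAB : A ⊆ B) (x : Euc n) :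
    duhamelMajorant n t A f x ≤ duhamelMajorant n t B f x :=
  lintegral_mono fun _ => lintegral_mono_set hAB

theorem duhamelMajorant_union_le (hf : Measurable (Function.uncurry f)) (x : Euc n) :
    duhamelMajorant n t (A ∪ B) f x ≤ duhamelMajorant n t A f x + duhamelMajorant n t B f x := by
  have meas := (measurable_enorm_heatKernel_mul (t := t) hf).lintegral_prod_right'
    (ν := volume.restrict A)
  refine (lintegral_mono fun τ => lintegral_union_le _ A B).trans_eq ?_
  exact lintegral_add_left (meas.comp measurable_prodMk_left) _

theorem duhamelMajorant_iUnion_le {ι : Type*} [Countable ι] {A : ι → Set (Euc n)}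
    (hf : Measurable (Function.uncurry f)) (x : Euc n) :
    duhamelMajorant n t (⋃ i, A i) f x ≤ ∑' i, duhamelMajorant n t (A i) f x := by
  have meas (i : ι) := (measurable_enorm_heatKernel_mul (t := t) hf).lintegral_prod_right'
    (ν := volume.restrict (A i))
  refine (lintegral_mono fun τ => lintegral_iUnion_le A _).trans_eq ?_
  exact lintegral_tsum fun i => ((meas i).comp measurable_prodMk_left).aemeasurable

theorem enorm_integral_heatKernel_mul_le (hf : Measurable (Function.uncurry f)) (x : Euc n) :
    ‖∫ z : ℝ × Euc n, heatKernel n (t - z.1) x z.2 * f z.1 z.2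
      ∂((volume.restrict (Ioo 0 t)).prod volume)‖ₑ ≤ duhamelMajorant n t univ f x := by
  have meas := (measurable_enorm_heatKernel_mul (t := t) hf).comp
    (by fun_prop : Measurable fun z : ℝ × Euc n => ((x, z.1), z.2))
  refine (enorm_integral_le_lintegral_enorm _).trans_eq ?_
  simp only [enorm_mul, duhamelMajorant, Measure.restrict_univ]
  exact lintegral_prod _ meas.aemeasurable

theorem duhamelMajorant_le_of_le_norm_sub (hn : 2 < n) :
    ∃ c : ℝ≥0, ∀ (l : ℤ) (t : ℝ) (A : Set (Euc n)) (f : ℝ → Euc n → ℝ) (x : Euc n) (S : ℝ≥0∞),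
      MeasurableSet A → Measurable (Function.uncurry f) → (∀ y ∈ A, (2 : ℝ) ^ l ≤ ‖x - y‖) →
      (∀ τ ∈ Ioo 0 t, ∫⁻ y in A, ‖f τ y‖ₑ ≤ S) →
      duhamelMajorant n t A f x ≤ c * (2 : ℝ≥0∞) ^ (l * (2 - n : ℝ)) * S := by
  have : NeZero n := ⟨by omega⟩
  have hn2 : (1 : ℝ) < n / 2 := by
    rw [lt_div_iff₀ two_pos]; exact_mod_cast by omega
  obtain ⟨c₁, hc₁⟩ := enorm_heatKernel_le_crossoverWeight (n := n)
  obtain ⟨c₂, hc₂⟩ := lintegral_crossoverWeight_sub_le zero_lt_one hn2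
  refine ⟨c₁ * c₂, fun l t A f x S hA hf hdist hS => ?_⟩
  set D : ℝ := 2 ^ l
  have hD : 0 < D := zpow_pos two_pos l
  set w : ℝ → ℝ≥0∞ := fun τ => ENNReal.ofReal (crossoverWeight 0 (n / 2) (D ^ 2) (t - τ))
  have hw : Measurable w :=
    ((measurable_crossoverWeight _ _ _).comp (measurable_const.sub measurable_id)).ennreal_ofReal
  have slice (τ : ℝ) (hτ : τ ∈ Ioo 0 t) :
      ∫⁻ y in A, ‖heatKernel n (t - τ) x y‖ₑ * ‖f τ y‖ₑ ≤
        c₁ * ENNReal.ofReal (D ^ (-(n : ℝ))) * S * w τ := by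
    calc ∫⁻ y in A, ‖heatKernel n (t - τ) x y‖ₑ * ‖f τ y‖ₑ
        ≤ ∫⁻ y in A, c₁ * ENNReal.ofReal (D ^ (-(n : ℝ))) * w τ * ‖f τ y‖ₑ :=
          setLIntegral_mono' hA fun y hy =>
            mul_le_mul_left (hc₁ D _ x y hD (sub_pos.2 hτ.2) (hdist y hy)) _
      _ = c₁ * ENNReal.ofReal (D ^ (-(n : ℝ))) * w τ * ∫⁻ y in A, ‖f τ y‖ₑ :=
          lintegral_const_mul _ (hf.comp measurable_prodMk_left).enorm
      _ ≤ c₁ * ENNReal.ofReal (D ^ (-(n : ℝ))) * w τ * S := by gcongr; exact hS τ hτ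
      _ = _ := by ring
  calc duhamelMajorant n t A f x
      ≤ ∫⁻ τ in Ioo 0 t, c₁ * ENNReal.ofReal (D ^ (-(n : ℝ))) * S * w τ :=
        setLIntegral_mono' measurableSet_Ioo slice
    _ = c₁ * ENNReal.ofReal (D ^ (-(n : ℝ))) * S * ∫⁻ τ in Ioo 0 t, w τ :=
        lintegral_const_mul _ hw
    _ ≤ c₁ * ENNReal.ofReal (D ^ (-(n : ℝ))) * S * (c₂ * ENNReal.ofReal ((D ^ 2) ^ (1 - 0 : ℝ))) :=
        by gcongr; exact hc₂ _ t (by positivity)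
    _ = (c₁ * c₂ : ℝ≥0) * (2 : ℝ≥0∞) ^ (l * (2 - n : ℝ)) * S := by
        rw [sub_zero, Real.rpow_one, ← Real.rpow_natCast D 2, ofReal_two_zpow_rpow,
          ofReal_two_zpow_rpow,
          show l * (2 - n : ℝ) = l * -(n : ℝ) + l * (2 : ℕ) by push_cast; ring, two_rpow_add]
        push_cast; ring

end DuhamelMajorant

section LocalEstimate

open scoped MeasureTheory

variable {n : ℕ}

theorem exists_young_exponent {p q : ℝ≥0∞} (hp : 1 ≤ p) (hpq : p ≤ q)
    (hgap : (p⁻¹).toReal - (q⁻¹).toReal < 1) :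
    ∃ m : ℝ≥0∞, 1 ≤ m ∧ m ≠ ⊤ ∧ p⁻¹ + m⁻¹ = 1 + q⁻¹ ∧
      1 - (m⁻¹).toReal = (p⁻¹).toReal - (q⁻¹).toReal := by
  have hqp : q⁻¹ ≤ p⁻¹ := ENNReal.inv_le_inv.2 hpq
  have hp1 : p⁻¹ ≤ 1 := ENNReal.inv_le_one.2 hp
  set d := p⁻¹ - q⁻¹ with hd
  have hd1 : d ≤ 1 := tsub_le_self.trans hp1
  have hd_real : d.toReal = (p⁻¹).toReal - (q⁻¹).toReal :=
    toReal_sub_of_le hqp (hp1.trans_lt one_lt_top).ne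
  have hd_lt : d < 1 := by
    rwa [← hd_real, ← toReal_one, toReal_lt_toReal (hd1.trans_lt one_lt_top).ne one_ne_top] at hgap
  refine ⟨(1 - d)⁻¹, ENNReal.one_le_inv.2 tsub_le_self,
    ENNReal.inv_ne_top.2 (tsub_pos_of_lt hd_lt).ne', ?_, ?_⟩
  · rw [inv_inv, ← tsub_add_cancel_of_le hqp, ← hd, add_right_comm, add_tsub_cancel_of_le hd1]
  · rw [inv_inv, toReal_sub_of_le hd1 one_ne_top, toReal_one, _root_.sub_sub_cancel, hd_real]

theorem measurable_uncurry_indicator {α β E : Type*} [MeasurableSpace α] [MeasurableSpace β]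
    [MeasurableSpace E] [Zero E] {g : β → α → E} (hg : Measurable (Function.uncurry g))
    {A : Set α} (hA : MeasurableSet A) :
    Measurable (Function.uncurry fun τ => A.indicator (g τ)) :=
  hg.indicator (hA.preimage measurable_snd)

theorem duhamelMajorant_eq_lintegral_lconvolution {t R : ℝ} {A : Set (Euc n)}
    (hA : MeasurableSet A) (f : ℝ → Euc n → ℝ) {x : Euc n} (hx : ∀ y ∈ A, ‖x - y‖ < R) :
    duhamelMajorant n t A f x =
      ∫⁻ τ in Ioo 0 t, ((fun y => ‖A.indicator (f τ) y‖ₑ) ⋆ₗ[volume]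
        fun z => ‖(Metric.ball 0 R).indicator (fun w => heatKernel n (t - τ) w 0) z‖ₑ) x := by
  refine lintegral_congr fun τ => ?_
  rw [lconvolution_def, ← lintegral_indicator hA]
  refine lintegral_congr fun y => ?_
  by_cases hy : y ∈ A
  · have : -y + x ∈ Metric.ball (0 : Euc n) R := by
      rw [neg_add_eq_sub, mem_ball_zero_iff]; exact hx y hy
    rw [indicator_of_mem hy, indicator_of_mem hy, indicator_of_mem this, neg_add_eq_sub,
      ← heatKernel_eq_heatKernel_sub, mul_comm]
  · rw [indicator_of_notMem hy, indicator_of_notMem hy, enorm_zero, zero_mul]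

theorem eLpNorm_duhamelMajorant_le_lintegral {p m q : ℝ≥0∞} (hp : 1 ≤ p) (hm : 1 ≤ m) (hq : 1 ≤ q)
    (hpm : p⁻¹ + m⁻¹ = 1 + q⁻¹) {t R : ℝ} {A B : Set (Euc n)} (hA : MeasurableSet A)
    (hB : MeasurableSet B) {f : ℝ → Euc n → ℝ} (hf : Measurable (Function.uncurry f))
    (hdist : ∀ x ∈ B, ∀ y ∈ A, ‖x - y‖ < R) :
    eLpNorm (duhamelMajorant n t A f) q (volume.restrict B) ≤
      ∫⁻ τ in Ioo 0 t, eLpNorm (f τ) p (volume.restrict A) *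
        eLpNorm ((Metric.ball 0 R).indicator fun z => heatKernel n (t - τ) z 0) m volume := by
  set F : ℝ → Euc n → ℝ≥0∞ := fun τ y => ‖A.indicator (f τ) y‖ₑ
  set G : ℝ → Euc n → ℝ≥0∞ := fun τ z =>
    ‖(Metric.ball 0 R).indicator (fun w => heatKernel n (t - τ) w 0) z‖ₑ
  have hF : Measurable (Function.uncurry F) := (measurable_uncurry_indicator hf hA).enorm
  have hG : Measurable (Function.uncurry G) := by
    have kernel : Measurable (Function.uncurry fun (τ : ℝ) (z : Euc n) =>
        heatKernel n (t - τ) z 0) := measurable_heatKernel.comp (by fun_prop :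
      Measurable fun z : ℝ × Euc n => (t - z.1, z.2, (0 : Euc n)))
    exact (measurable_uncurry_indicator kernel measurableSet_ball).enorm
  calc eLpNorm (duhamelMajorant n t A f) q (volume.restrict B)
      = eLpNorm (fun x => ∫⁻ τ in Ioo 0 t, (F τ ⋆ₗ[volume] G τ) x) q (volume.restrict B) :=
        eLpNorm_congr_ae (ae_restrict_of_forall_mem hB fun x hx =>
          duhamelMajorant_eq_lintegral_lconvolution hA f (hdist x hx))
    _ ≤ ∫⁻ τ in Ioo 0 t, eLpNorm (F τ ⋆ₗ[volume] G τ) q volume :=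
        (eLpNorm_restrict_le _ _ _ _).trans
          (eLpNorm_lintegral_le (measurable_uncurry_lconvolution hF hG) hq)
    _ ≤ ∫⁻ τ in Ioo 0 t, eLpNorm (F τ) p volume * eLpNorm (G τ) m volume :=
        lintegral_mono fun τ => eLpNorm_lconvolution_le (hF.comp measurable_prodMk_left)
          (hG.comp measurable_prodMk_left) hp hm hpm
    _ = _ := by
        simp only [F, G, eLpNorm_enorm, eLpNorm_indicator_eq_eLpNorm_restrict hA]

theorem eLpNorm_duhamelMajorant_le (hn : 2 < n) {p q : ℝ≥0∞} (hp : 1 ≤ p) (hpq : p ≤ q)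
    (hgap : n * ((p⁻¹).toReal - (q⁻¹).toReal) < 2) :
    ∃ c : ℝ≥0, ∀ (l : ℤ) (t : ℝ) (A B : Set (Euc n)) (f : ℝ → Euc n → ℝ) (S : ℝ≥0∞),
      MeasurableSet A → MeasurableSet B → Measurable (Function.uncurry f) →
      (∀ x ∈ B, ∀ y ∈ A, ‖x - y‖ < (2 : ℝ) ^ l) →
      (∀ τ ∈ Ioo 0 t, eLpNorm (f τ) p (volume.restrict A) ≤ S) →
      eLpNorm (duhamelMajorant n t A f) q (volume.restrict B) ≤
        c * (2 : ℝ≥0∞) ^ (l * (2 - n * ((p⁻¹).toReal - (q⁻¹).toReal))) * S := by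
  have hn' : (2 : ℝ) < n := by exact_mod_cast hn
  obtain ⟨m, hm, hmt, hpm, hm_gap⟩ := exists_young_exponent hp hpq (by nlinarith)
  obtain ⟨c₁, hc₁⟩ := eLpNorm_indicator_ball_heatKernel_le (n := n) hm hmt
  rw [hm_gap] at hc₁
  set a : ℝ := n / 2 * ((p⁻¹).toReal - (q⁻¹).toReal) with ha
  obtain ⟨c₂, hc₂⟩ := lintegral_crossoverWeight_sub_le (a := a) (b := n / 2)
    (by linarith) (by linarith)
  refine ⟨c₁ * c₂, fun l t A B f S hA hB hf hdist hS => ?_⟩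
  set R : ℝ := 2 ^ l
  have hR : 0 < R := zpow_pos two_pos l
  set w : ℝ → ℝ≥0∞ := fun τ => ENNReal.ofReal (crossoverWeight a (n / 2) (R ^ 2) (t - τ))
  have hw : Measurable w :=
    ((measurable_crossoverWeight _ _ _).comp (measurable_const.sub measurable_id)).ennreal_ofReal
  calc eLpNorm (duhamelMajorant n t A f) q (volume.restrict B)
      ≤ ∫⁻ τ in Ioo 0 t, eLpNorm (f τ) p (volume.restrict A) *
          eLpNorm ((Metric.ball 0 R).indicator fun z => heatKernel n (t - τ) z 0) m volume :=
        eLpNorm_duhamelMajorant_le_lintegral hp hm (hp.trans hpq) hpm hA hB hf hdist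
    _ ≤ ∫⁻ τ in Ioo 0 t, S * (c₁ * w τ) :=
        setLIntegral_mono' measurableSet_Ioo fun τ hτ =>
          mul_le_mul' (hS τ hτ) (hc₁ R _ hR (sub_pos.2 hτ.2))
    _ = S * (c₁ * ∫⁻ τ in Ioo 0 t, w τ) := by
        rw [lintegral_const_mul _ (hw.const_mul _), lintegral_const_mul _ hw]
    _ ≤ S * (c₁ * (c₂ * ENNReal.ofReal ((R ^ 2) ^ (1 - a)))) := by
        gcongr; exact hc₂ _ t (by positivity)
    _ = _ := by
        rw [← Real.rpow_natCast R 2, ← Real.rpow_mul hR.le, ofReal_two_zpow_rpow,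
          show ((2 : ℕ) : ℝ) * (1 - a) = 2 - n * ((p⁻¹).toReal - (q⁻¹).toReal) by
            rw [ha]; push_cast; ring]
        push_cast; ring

end LocalEstimate

section HerzEstimates

variable {n : ℕ}

theorem eLpNorm_restrict_union_le {α E : Type*} [MeasurableSpace α] [NormedAddCommGroup E]
    {κ : Measure α} {f : α → E} (hf : AEStronglyMeasurable f κ) {p : ℝ≥0∞} (hp : 1 ≤ p)
    {A B : Set α} (hA : MeasurableSet A) (hB : MeasurableSet B) :
    eLpNorm f p (κ.restrict (A ∪ B)) ≤
      eLpNorm f p (κ.restrict A) + eLpNorm f p (κ.restrict B) := by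
  rw [← union_sdiff_self, ← eLpNorm_indicator_eq_eLpNorm_restrict (hA.union (hB.diff hA)),
    indicator_union_of_disjoint disjoint_sdiff_right]
  refine (eLpNorm_add_le (hf.indicator hA) (hf.indicator (hB.diff hA)) hp).trans ?_
  rw [eLpNorm_indicator_eq_eLpNorm_restrict hA, eLpNorm_indicator_eq_eLpNorm_restrict (hB.diff hA)]
  gcongr
  exact sdiff_subset

theorem eLpNorm_annulus_le_herzNorm (s : ℝ) (p : ℝ≥0∞) {r : ℝ≥0∞} (hr : 0 < r) (f : Euc n → ℝ)
    (j : ℤ) :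
    eLpNorm f p (volume.restrict (annulus n j)) ≤
      (2 : ℝ≥0∞) ^ (-(j * s)) * herzNorm n s p r f := by
  calc eLpNorm f p (volume.restrict (annulus n j))
      = (2 : ℝ≥0∞) ^ (-(j * s)) * herzBlock n s p f j := by
        rw [herzBlock, ← mul_assoc, ← two_rpow_add, neg_add_cancel, ENNReal.rpow_zero, one_mul]
    _ ≤ _ := by gcongr; exact herzBlock_le_herzNorm s p hr f j

theorem herzBlock_le_of_enorm_le {E : Type*} [TopologicalSpace E] [ContinuousENorm E] (s : ℝ)
    {q : ℝ≥0∞} (hq : q ≠ 0) :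
    ∃ c : ℝ≥0, ∀ (j : ℤ) (g : Euc n → E) (K : ℝ≥0∞), AEStronglyMeasurable g →
      (∀ x ∈ annulus n j, ‖g x‖ₑ ≤ K) →
      herzBlock n s q g j ≤ c * (2 : ℝ≥0∞) ^ (j * (s + n * (q⁻¹).toReal)) * K := by
  obtain ⟨c, hc⟩ := eLpNorm_restrict_annulus_le (n := n) (E := E) hq le_top
  refine ⟨c, fun j g K hg hK => ?_⟩
  have sup_le : eLpNorm g ⊤ (volume.restrict (annulus n j)) ≤ K :=
    eLpNormEssSup_le_of_ae_enorm_bound (ae_restrict_of_forall_mem (measurableSet_annulus j) hK)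
  calc herzBlock n s q g j
      ≤ 2 ^ (j * s) * (c * (2 : ℝ≥0∞) ^ (j * (n * ((q⁻¹).toReal - (⊤⁻¹ : ℝ≥0∞).toReal))) * K) :=
        mul_le_mul_right ((hc j g hg).trans (mul_le_mul_right sup_le _)) _
    _ = _ := by
        rw [inv_top, toReal_zero, sub_zero, mul_add, two_rpow_add]
        ring

/-- The union of the annulus `A_k` and its two neighbours. Sources outside of it are at distance
comparable to `max (2 ^ k) ‖y‖` from every point of `A_k`. -/
def nearShell (n : ℕ) (k : ℤ) : Set (Euc n) :=
  annulus n (k - 1) ∪ annulus n k ∪ annulus n (k + 1)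

theorem measurableSet_nearShell (k : ℤ) : MeasurableSet (nearShell n k) :=
  ((measurableSet_annulus _).union (measurableSet_annulus _)).union (measurableSet_annulus _)

theorem norm_lt_of_mem_nearShell {k : ℤ} {y : Euc n} (hy : y ∈ nearShell n k) :
    ‖y‖ < 2 ^ (k + 1) := by
  rcases hy with (hy | hy) | hy
  · exact hy.2.trans_le (zpow_le_zpow_right₀ one_le_two (by omega))
  · exact hy.2.trans_le (zpow_le_zpow_right₀ one_le_two (by omega))
  · exact hy.2

theorem compl_nearShell_subset (k : ℤ) :
    (nearShell n k)ᶜ ⊆ Metric.ball 0 (2 ^ (k - 2)) ∪ (Metric.ball 0 (2 ^ (k + 1)))ᶜ := by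
  intro y hy
  rcases eq_or_ne y 0 with rfl | h0
  · exact Or.inl (Metric.mem_ball_self (zpow_pos two_pos _))
  obtain ⟨j, hj⟩ := exists_mem_annulus h0
  rcases le_or_gt j (k - 2) with hjk | hjk
  · exact Or.inl (mem_ball_zero_iff.2 (hj.2.trans_le (zpow_le_zpow_right₀ one_le_two hjk)))
  have : k + 2 ≤ j := by
    by_contra! hlt
    obtain rfl | rfl | rfl : j = k - 1 ∨ j = k ∨ j = k + 1 := by omega
    · exact hy (Or.inl (Or.inl hj))
    · exact hy (Or.inl (Or.inr hj))
    · exact hy (Or.inr hj)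
  refine Or.inr fun hball => (mem_ball_zero_iff.1 hball).not_ge ?_
  exact (zpow_le_zpow_right₀ one_le_two (by omega)).trans hj.1

theorem eLpNorm_nearShell_le_herzNorm (s : ℝ) {p r : ℝ≥0∞} (hp : 1 ≤ p) (hr : 0 < r) :
    ∃ c : ℝ≥0, ∀ (k : ℤ) (f : Euc n → ℝ), AEStronglyMeasurable f →
      eLpNorm f p (volume.restrict (nearShell n k)) ≤
        c * (2 : ℝ≥0∞) ^ (-(k * s)) * herzNorm n s p r f := by
  refine ⟨2 ^ |s| * 3, fun k f hf => ?_⟩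
  have piece (j : ℤ) (hj : |(j : ℝ) - k| ≤ 1) : eLpNorm f p (volume.restrict (annulus n j)) ≤
      2 ^ |s| * 2 ^ (-(k * s)) * herzNorm n s p r f := by
    have : -(j * s) ≤ |s| + -(k * s) := by
      have := neg_abs_le ((j - k) * s)
      rw [abs_mul] at this
      nlinarith [abs_nonneg s]
    refine (eLpNorm_annulus_le_herzNorm s p hr f j).trans ?_
    rw [← two_rpow_add]
    gcongr
    exact one_le_two
  calc eLpNorm f p (volume.restrict (nearShell n k))
      ≤ eLpNorm f p (volume.restrict (annulus n (k - 1))) +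
          eLpNorm f p (volume.restrict (annulus n k)) +
          eLpNorm f p (volume.restrict (annulus n (k + 1))) :=
        (eLpNorm_restrict_union_le hf hp ((measurableSet_annulus _).union (measurableSet_annulus _))
          (measurableSet_annulus _)).trans (add_le_add_left (eLpNorm_restrict_union_le hf hp
            (measurableSet_annulus _) (measurableSet_annulus _)) _)
    _ ≤ _ :=
        add_le_add_three (piece (k - 1) (by simp)) (piece k (by simp)) (piece (k + 1) (by simp))
    _ = _ := by
        rw [ENNReal.coe_mul, ENNReal.coe_rpow_of_nonneg _ (abs_nonneg s)]
        push_cast; ring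

theorem duhamelMajorant_ball_le (hn : 2 < n) {s : ℝ} {p r : ℝ≥0∞} (hp : 1 ≤ p) (hr : 0 < r)
    (hs : s + n * (p⁻¹).toReal < n ∨ s + n * (p⁻¹).toReal = n ∧ r ≤ 1) :
    ∃ c : ℝ≥0, ∀ (k : ℤ) (t : ℝ) (f : ℝ → Euc n → ℝ) (S : ℝ≥0∞),
      Measurable (Function.uncurry f) → (∀ τ ∈ Ioo 0 t, herzNorm n s p r (f τ) ≤ S) →
      ∀ x ∈ annulus n k, duhamelMajorant n t (Metric.ball 0 (2 ^ (k - 2))) f x ≤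
        c * (2 : ℝ≥0∞) ^ (-(k * (s + n * (p⁻¹).toReal - 2))) * S := by
  have : NeZero n := ⟨by omega⟩
  obtain ⟨c₁, hc₁⟩ := duhamelMajorant_le_of_le_norm_sub hn
  obtain ⟨c₂, hc₂⟩ := lintegral_enorm_ball_le (n := n) hp hr hs
  set N := n * (1 - (p⁻¹).toReal) - s with hN
  refine ⟨c₁ * c₂ * 2 ^ (2 * (s + n * (p⁻¹).toReal - 2)), fun k t f S hf hS x hx => ?_⟩
  have far (y : Euc n) (hy : y ∈ Metric.ball 0 (2 ^ (k - 2))) : (2 : ℝ) ^ (k - 2) ≤ ‖x - y‖ := by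
    have hx := hx.1
    have hy := mem_ball_zero_iff.1 hy
    have : (2 : ℝ) ^ (k - 1) = 2 * 2 ^ (k - 2) := by
      rw [← zpow_one_add₀ two_ne_zero]; congr 1; ring
    linarith [norm_sub_norm_le x y]
  have mass (τ : ℝ) (hτ : τ ∈ Ioo 0 t) : ∫⁻ y in Metric.ball 0 (2 ^ (k - 2)), ‖f τ y‖ₑ ≤
      c₂ * 2 ^ (((k - 2 : ℤ) : ℝ) * N) * S :=
    (hc₂ (k - 2) (f τ) (hf.comp measurable_prodMk_left)).trans (mul_le_mul_right (hS τ hτ) _)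
  refine (hc₁ (k - 2) t _ f x _ measurableSet_ball hf far mass).trans_eq ?_
  have exponents : ((k - 2 : ℤ) : ℝ) * (2 - n) + ((k - 2 : ℤ) : ℝ) * N =
      2 * (s + n * (p⁻¹).toReal - 2) + -(k * (s + n * (p⁻¹).toReal - 2)) := by
    rw [hN]; push_cast; ring
  have powers := congrArg (fun x : ℝ => (2 : ℝ≥0∞) ^ x) exponents
  simp only [two_rpow_add] at powers
  calc c₁ * 2 ^ (((k - 2 : ℤ) : ℝ) * (2 - n)) * (c₂ * 2 ^ (((k - 2 : ℤ) : ℝ) * N) * S)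
      = c₁ * c₂ * (2 ^ (((k - 2 : ℤ) : ℝ) * (2 - n)) * 2 ^ (((k - 2 : ℤ) : ℝ) * N)) * S := by ring
    _ = _ := by
        rw [powers, ENNReal.coe_mul, ENNReal.coe_rpow_of_ne_zero two_ne_zero]
        push_cast; ring

theorem duhamelMajorant_annulus_le (hn : 2 < n) (s : ℝ) {p r : ℝ≥0∞} (hp : 1 ≤ p) (hr : 0 < r) :
    ∃ c : ℝ≥0, ∀ (k : ℤ) (i : ℕ) (t : ℝ) (f : ℝ → Euc n → ℝ) (S : ℝ≥0∞),
      Measurable (Function.uncurry f) → (∀ τ ∈ Ioo 0 t, herzNorm n s p r (f τ) ≤ S) →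
      ∀ x ∈ annulus n k, duhamelMajorant n t (annulus n (k + 1 + 1 + i)) f x ≤
        c * (2 : ℝ≥0∞) ^ (-((k + i) * (s + n * (p⁻¹).toReal - 2))) * S := by
  obtain ⟨c₁, hc₁⟩ := duhamelMajorant_le_of_le_norm_sub hn
  obtain ⟨c₂, hc₂⟩ := lintegral_enorm_annulus_le (n := n) (E := ℝ) s hp
  set N := n * (1 - (p⁻¹).toReal) - s with hN
  refine ⟨c₁ * c₂ * 2 ^ (2 * N), fun k i t f S hf hS x hx => ?_⟩
  have far (y : Euc n) (hy : y ∈ annulus n (k + 1 + 1 + i)) : (2 : ℝ) ^ (k + i) ≤ ‖x - y‖ := by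
    have hx := hx.2
    have hy : (2 : ℝ) ^ (k + i) * 2 ≤ ‖y‖ := by
      rw [← zpow_add_one₀ two_ne_zero, show k + i + 1 = k + 1 + 1 + i - 1 by ring]; exact hy.1
    have : (2 : ℝ) ^ k ≤ 2 ^ (k + i) := zpow_le_zpow_right₀ one_le_two (by omega)
    linarith [norm_sub_norm_le y x, norm_sub_rev y x]
  have mass (τ : ℝ) (hτ : τ ∈ Ioo 0 t) : ∫⁻ y in annulus n (k + 1 + 1 + i), ‖f τ y‖ₑ ≤
      c₂ * 2 ^ (((k + 1 + 1 + i : ℤ) : ℝ) * N) * S :=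
    (hc₂ _ (f τ) (hf.comp measurable_prodMk_left).aestronglyMeasurable).trans
      (mul_le_mul_right ((herzBlock_le_herzNorm s p hr _ _).trans (hS τ hτ)) _)
  refine (hc₁ (k + i) t _ f x _ (measurableSet_annulus _) hf far mass).trans_eq ?_
  have exponents : ((k + i : ℤ) : ℝ) * (2 - n) + ((k + 1 + 1 + i : ℤ) : ℝ) * N =
      2 * N + -((k + i) * (s + n * (p⁻¹).toReal - 2)) := by
    rw [hN]; push_cast; ring
  have powers := congrArg (fun x : ℝ => (2 : ℝ≥0∞) ^ x) exponents
  simp only [two_rpow_add] at powers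
  calc c₁ * 2 ^ (((k + i : ℤ) : ℝ) * (2 - n)) * (c₂ * 2 ^ (((k + 1 + 1 + i : ℤ) : ℝ) * N) * S)
      = c₁ * c₂ * (2 ^ (((k + i : ℤ) : ℝ) * (2 - n)) * 2 ^ (((k + 1 + 1 + i : ℤ) : ℝ) * N)) * S :=
        by ring
    _ = _ := by
        rw [powers, ENNReal.coe_mul, ENNReal.coe_rpow_of_ne_zero two_ne_zero]
        push_cast; ring

theorem duhamelMajorant_compl_ball_le (hn : 2 < n) {s : ℝ} {p r : ℝ≥0∞} (hp : 1 ≤ p) (hr : 0 < r)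
    (hs : 2 < s + n * (p⁻¹).toReal) :
    ∃ c : ℝ≥0, ∀ (k : ℤ) (t : ℝ) (f : ℝ → Euc n → ℝ) (S : ℝ≥0∞),
      Measurable (Function.uncurry f) → (∀ τ ∈ Ioo 0 t, herzNorm n s p r (f τ) ≤ S) →
      ∀ x ∈ annulus n k, duhamelMajorant n t (Metric.ball 0 (2 ^ (k + 1)))ᶜ f x ≤
        c * (2 : ℝ≥0∞) ^ (-(k * (s + n * (p⁻¹).toReal - 2))) * S := by
  obtain ⟨c, hc⟩ := duhamelMajorant_annulus_le hn s hp hr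
  set N := s + n * (p⁻¹).toReal - 2
  have summable := tsum_two_rpow_neg_ne_top (sub_pos.2 hs)
  refine ⟨c * (∑' i : ℕ, (2 : ℝ≥0∞) ^ (-(i * N))).toNNReal, fun k t f S hf hS x hx => ?_⟩
  calc duhamelMajorant n t (Metric.ball 0 (2 ^ (k + 1)))ᶜ f x
      ≤ duhamelMajorant n t (⋃ i : ℕ, annulus n (k + 1 + 1 + i)) f x :=
        duhamelMajorant_mono (compl_ball_subset_iUnion_annulus (k + 1)) x
    _ ≤ ∑' i : ℕ, duhamelMajorant n t (annulus n (k + 1 + 1 + i)) f x :=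
        duhamelMajorant_iUnion_le hf x
    _ ≤ ∑' i : ℕ, c * (2 : ℝ≥0∞) ^ (-((k + i) * N)) * S :=
        ENNReal.tsum_le_tsum fun i => hc k i t f S hf hS x hx
    _ = ∑' i : ℕ, c * ((2 : ℝ≥0∞) ^ (-(k * N)) * 2 ^ (-(i * N))) * S := by
        simp only [← two_rpow_add, ← neg_add, add_mul]
    _ = _ := by
        rw [ENNReal.tsum_mul_right, ENNReal.tsum_mul_left, ENNReal.tsum_mul_left, ENNReal.coe_mul,
          coe_toNNReal summable]
        ring

theorem herzBlock_duhamelMajorant_compl_nearShell_le (hn : 2 < n) {μ ν : ℝ} {p q r : ℝ≥0∞}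
    (hp : 1 ≤ p) (hq : q ≠ 0) (hr : 0 < r) (hν : 0 < ν + n * (q⁻¹).toReal)
    (hscale : ν + n * (q⁻¹).toReal = μ + n * (p⁻¹).toReal - 2)
    (hμ : μ + n * (p⁻¹).toReal < n ∨ μ + n * (p⁻¹).toReal = n ∧ r ≤ 1) :
    ∃ c : ℝ≥0, ∀ (k : ℤ) (t : ℝ) (f : ℝ → Euc n → ℝ) (S : ℝ≥0∞),
      Measurable (Function.uncurry f) → (∀ τ ∈ Ioo 0 t, herzNorm n μ p r (f τ) ≤ S) →
      herzBlock n ν q (duhamelMajorant n t (nearShell n k)ᶜ f) k ≤ c * S := by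
  obtain ⟨c₁, hc₁⟩ := duhamelMajorant_ball_le hn hp hr hμ
  obtain ⟨c₂, hc₂⟩ := duhamelMajorant_compl_ball_le hn hp hr (s := μ) (by linarith)
  obtain ⟨c₃, hc₃⟩ := herzBlock_le_of_enorm_le (n := n) (E := ℝ≥0∞) ν hq
  rw [← hscale] at hc₁ hc₂
  refine ⟨c₃ * (c₁ + c₂), fun k t f S hf hS => ?_⟩
  have pointwise (x : Euc n) (hx : x ∈ annulus n k) : duhamelMajorant n t (nearShell n k)ᶜ f x ≤
      (c₁ + c₂) * 2 ^ (-(k * (ν + n * (q⁻¹).toReal))) * S := by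
    refine (duhamelMajorant_mono (compl_nearShell_subset k) x).trans ?_
    refine (duhamelMajorant_union_le hf x).trans ?_
    rw [add_mul, add_mul]
    exact add_le_add (hc₁ k t f S hf hS x hx) (hc₂ k t f S hf hS x hx)
  calc herzBlock n ν q (duhamelMajorant n t (nearShell n k)ᶜ f) k
      ≤ c₃ * 2 ^ (k * (ν + n * (q⁻¹).toReal)) *
          ((c₁ + c₂) * 2 ^ (-(k * (ν + n * (q⁻¹).toReal))) * S) :=
        hc₃ k _ _ (measurable_duhamelMajorant hf).aestronglyMeasurable pointwise
    _ = c₃ * (c₁ + c₂) * (2 ^ (k * (ν + n * (q⁻¹).toReal)) *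
          2 ^ (-(k * (ν + n * (q⁻¹).toReal)))) * S := by ring
    _ = _ := by
        rw [← two_rpow_add, add_neg_cancel, ENNReal.rpow_zero, mul_one]
        push_cast; ring

theorem herzBlock_duhamelMajorant_nearShell_le (hn : 2 < n) {μ ν : ℝ} {p q r : ℝ≥0∞}
    (hp : 1 ≤ p) (hq : q ≠ 0) (hr : 0 < r) (hμν : ν < μ)
    (hscale : ν + n * (q⁻¹).toReal = μ + n * (p⁻¹).toReal - 2) :
    ∃ c : ℝ≥0, ∀ (k : ℤ) (t : ℝ) (f : ℝ → Euc n → ℝ) (S : ℝ≥0∞),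
      Measurable (Function.uncurry f) → (∀ τ ∈ Ioo 0 t, herzNorm n μ p r (f τ) ≤ S) →
      herzBlock n ν q (duhamelMajorant n t (nearShell n k) f) k ≤ c * S := by
  set Q := max p q with hQ
  have gap : n * ((p⁻¹).toReal - (Q⁻¹).toReal) < 2 := by
    rcases max_choice p q with h | h <;> rw [hQ, h] <;> linarith
  obtain ⟨c₁, hc₁⟩ := eLpNorm_restrict_annulus_le (n := n) (E := ℝ≥0∞) hq (le_max_right p q)
  obtain ⟨c₂, hc₂⟩ := eLpNorm_duhamelMajorant_le hn hp (le_max_left p q) gap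
  obtain ⟨c₃, hc₃⟩ := eLpNorm_nearShell_le_herzNorm (n := n) μ hp hr
  set θ := 2 - n * ((p⁻¹).toReal - (Q⁻¹).toReal) with hθ
  set δ := n * ((q⁻¹).toReal - (Q⁻¹).toReal) with hδ
  refine ⟨c₁ * c₂ * c₃ * 2 ^ (2 * θ), fun k t f S hf hS => ?_⟩
  have close (x : Euc n) (hx : x ∈ annulus n k) (y : Euc n) (hy : y ∈ nearShell n k) :
      ‖x - y‖ < 2 ^ (k + 2) := by
    have hx := hx.2
    have hy := norm_lt_of_mem_nearShell hy
    rw [zpow_add₀ two_ne_zero] at hy ⊢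
    linarith [norm_sub_le x y, zpow_pos (two_pos (α := ℝ)) k]
  have source (τ : ℝ) (hτ : τ ∈ Ioo 0 t) : eLpNorm (f τ) p (volume.restrict (nearShell n k)) ≤
      c₃ * 2 ^ (-(k * μ)) * S :=
    (hc₃ k (f τ) (hf.comp measurable_prodMk_left).aestronglyMeasurable).trans
      (mul_le_mul_right (hS τ hτ) _)
  have young := hc₂ (k + 2) t (nearShell n k) (annulus n k) f _ (measurableSet_nearShell k)
    (measurableSet_annulus k) hf close source
  have exponents : k * ν + k * δ + ((k + 2 : ℤ) : ℝ) * θ + -(k * μ) = 2 * θ := by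
    rw [hθ, hδ]; push_cast; linear_combination k * hscale
  have powers := congrArg (fun x : ℝ => (2 : ℝ≥0∞) ^ x) exponents
  simp only [two_rpow_add] at powers
  calc herzBlock n ν q (duhamelMajorant n t (nearShell n k) f) k
      ≤ 2 ^ (k * ν) * (c₁ * 2 ^ (k * δ) *
          (c₂ * 2 ^ (((k + 2 : ℤ) : ℝ) * θ) * (c₃ * 2 ^ (-(k * μ)) * S))) := by
        refine mul_le_mul_right ((hc₁ k _ ?_).trans (mul_le_mul_right young _)) _
        exact (measurable_duhamelMajorant hf).aestronglyMeasurable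
    _ = c₁ * c₂ * c₃ * (2 ^ (k * ν) * 2 ^ (k * δ) * 2 ^ (((k + 2 : ℤ) : ℝ) * θ) *
          2 ^ (-(k * μ))) * S := by ring
    _ = _ := by
        rw [powers, ENNReal.coe_mul, ENNReal.coe_rpow_of_ne_zero two_ne_zero]
        push_cast; ring

theorem herzBlock_add_le (s : ℝ) (q : ℝ≥0∞) :
    ∃ c : ℝ≥0, ∀ (j : ℤ) (f g : Euc n → ℝ≥0∞), AEMeasurable f → AEMeasurable g →
      herzBlock n s q (f + g) j ≤ c * (herzBlock n s q f j + herzBlock n s q g j) := by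
  refine ⟨(LpAddConst q).toNNReal, fun j f g hf hg => ?_⟩
  rw [coe_toNNReal (LpAddConst_lt_top q).ne, herzBlock, herzBlock, herzBlock, ← mul_add,
    mul_left_comm]
  gcongr
  exact eLpNorm_add_le' hf.aestronglyMeasurable.restrict hg.aestronglyMeasurable.restrict q

end HerzEstimates

theorem herzNorm_top_integral_heatKernel_mul_le {n : ℕ} {t : ℝ} {f : ℝ → Euc n → ℝ}
    (hf : Measurable (Function.uncurry f)) (s : ℝ) (q : ℝ≥0∞) :
    herzNorm n s q ⊤ (fun x => ∫ z : ℝ × Euc n, heatKernel n (t - z.1) x z.2 * f z.1 z.2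
      ∂((volume.restrict (Ioo 0 t)).prod volume)) ≤
      ⨆ k, herzBlock n s q (duhamelMajorant n t univ f) k := by
  rw [herzNorm_top_eq_iSup]
  exact iSup_mono (herzBlock_mono_enorm (ae_of_all _ (enorm_integral_heatKernel_mul_le hf)))

theorem meyer_inequality_herz_general {n : ℕ} {μ ν : ℝ} {p q r : ℝ≥0∞} (hp : 1 ≤ p) (hq : q ≠ 0)
    (hr : 0 < r) (hμν : ν < μ) (hν : 0 < ν + n * (q⁻¹).toReal)
    (hscale : ν + n * (q⁻¹).toReal = μ + n * (p⁻¹).toReal - 2)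
    (hμ : μ + n * (p⁻¹).toReal < n ∨ μ + n * (p⁻¹).toReal = n ∧ r ≤ 1) :
    ∃ c : ℝ≥0, ∀ (t : ℝ) (f : ℝ → Euc n → ℝ), Measurable (Function.uncurry f) →
      ⨆ k, herzBlock n ν q (duhamelMajorant n t univ f) k ≤
        c * ⨆ τ ∈ Ioo 0 t, herzNorm n μ p r (f τ) := by
  have hn : 2 < n := by
    have : (2 : ℝ) < n := by rcases hμ with h | h <;> linarith
    exact_mod_cast this
  obtain ⟨c₁, near⟩ := herzBlock_duhamelMajorant_nearShell_le hn hp hq hr hμν hscale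
  obtain ⟨c₂, far⟩ := herzBlock_duhamelMajorant_compl_nearShell_le hn hp hq hr hν hscale hμ
  obtain ⟨c₃, triangle⟩ := herzBlock_add_le (n := n) ν q
  refine ⟨c₃ * (c₁ + c₂), fun t f hf => iSup_le fun k => ?_⟩
  set S := ⨆ τ ∈ Ioo 0 t, herzNorm n μ p r (f τ)
  have hS (τ : ℝ) (hτ : τ ∈ Ioo 0 t) : herzNorm n μ p r (f τ) ≤ S :=
    le_biSup (fun τ => herzNorm n μ p r (f τ)) hτ
  calc herzBlock n ν q (duhamelMajorant n t univ f) k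
      ≤ herzBlock n ν q (duhamelMajorant n t (nearShell n k) f +
          duhamelMajorant n t (nearShell n k)ᶜ f) k := by
        refine herzBlock_mono_enorm (ae_of_all _ fun x => ?_) k
        rw [← union_compl_self (nearShell n k)]
        exact duhamelMajorant_union_le hf x
    _ ≤ c₃ * (c₁ * S + c₂ * S) :=
        (triangle k _ _ (measurable_duhamelMajorant hf).aemeasurable
          (measurable_duhamelMajorant hf).aemeasurable).trans
          (mul_le_mul_right (add_le_add (near k t f S hf hS) (far k t f S hf hS)) _)
    _ = _ := by push_cast; ring

/-- Meyer's inequality on Herz spaces: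
`‖∫₀ᵗ e^{(t-τ)Δ} f(τ) dτ‖_{K̇^ν_{q,∞}} ≲ sup_{0<τ<t} ‖f(τ)‖_{K̇^μ_{p,r}}`. -/
theorem meyer_inequality_herz
    (n : ℕ) (hn : 3 ≤ n) (μ ν : ℝ) (p q r : ℝ≥0∞)
    (hp : 1 ≤ p) (hq : 1 ≤ q) (hr : 0 < r)
    (hμν : ν < μ)
    (h0 : 0 < ν / (n : ℝ) + (q⁻¹).toReal)
    (h1 : ν / (n : ℝ) + (q⁻¹).toReal < μ / (n : ℝ) + (p⁻¹).toReal)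
    (h2 : μ / (n : ℝ) + (p⁻¹).toReal ≤ 1)
    (heq : ν / (n : ℝ) + (q⁻¹).toReal = (μ / (n : ℝ) + (p⁻¹).toReal) - 2 / (n : ℝ))
    (hcase : (p < ⊤ ∧ q < ⊤ ∧ μ / (n : ℝ) + (p⁻¹).toReal < 1) ∨ r ≤ 1) :
    ∃ C : ℝ, 0 < C ∧ ∀ T : ℝ, 0 < T → ∀ t ∈ Set.Ioc (0 : ℝ) T,
      ∀ f : ℝ → Euc n → ℝ, Measurable (Function.uncurry f) →
        (∀ᵐ x : Euc n ∂volume,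
          Integrable (fun z : ℝ × Euc n => heatKernel n (t - z.1) x z.2 * f z.1 z.2)
            ((volume.restrict (Set.Ioo (0 : ℝ) t)).prod volume)) →
        herzNorm n ν q ⊤ (fun x =>
            ∫ z : ℝ × Euc n, heatKernel n (t - z.1) x z.2 * f z.1 z.2
              ∂((volume.restrict (Set.Ioo (0 : ℝ) t)).prod volume)) ≤
          ENNReal.ofReal C * ⨆ τ ∈ Set.Ioo (0 : ℝ) t, herzNorm n μ p r (f τ) := by
  have hn0 : (0 : ℝ) < n := by positivity
  have scale (x : ℝ) (a : ℝ≥0∞) : x + n * (a⁻¹).toReal = n * (x / n + (a⁻¹).toReal) := by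
    field_simp
  obtain ⟨c, hc⟩ := meyer_inequality_herz_general hp (zero_lt_one.trans_le hq).ne' hr hμν
    (scale ν q ▸ mul_pos hn0 h0)
    (by rw [scale, scale, heq, mul_sub, mul_div_cancel₀ _ hn0.ne'])
    (by
      rw [scale, mul_lt_iff_lt_one_right hn0, mul_eq_left₀ hn0.ne']
      exact h2.lt_or_eq.imp_right fun h => ⟨h, hcase.resolve_left fun h' => h'.2.2.ne h⟩)
  refine ⟨c + 1, by positivity, fun T _ t _ f hf _ => ?_⟩
  refine (herzNorm_top_integral_heatKernel_mul_le hf ν q).trans ((hc t f hf).trans ?_)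
  gcongr
  rw [← ENNReal.ofReal_coe_nnreal]
  exact ENNReal.ofReal_le_ofReal (le_add_of_nonneg_right zero_le_one)
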